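/- arXiv:1207.1293 — 5 statements merged into one kernel-verified Lean document; each statement's English description precedes it below -/
import Mathlib

section
/- Let I be a nonempty index set and let {μ_s : s ∈ I} be a tight family of Borel probability measures on ℝ^d satisfying the logarithmic Sobolev inequality with a constant C > 0, i.e. ∫ f² log(|f|/‖f‖_{2,μ_s}) dμ_s ≤ C ∫ |∇f|² dμ_s for every s ∈ I and every f ∈ C¹_b(ℝ^d). Then for every λ > 0 one has sup_{s∈I} ∫_{ℝ^d} e^{λ|x|} dμ_s(x) < +∞. -/
open MeasureTheory

/-- `f : ℝ^d → ℝ` is of class `C¹_b`: continuously differentiable, bounded, with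
bounded gradient. -/
def C1b {d : ℕ} (f : EuclideanSpace ℝ (Fin d) → ℝ) : Prop :=
  ContDiff ℝ 1 f ∧ (∃ M, ∀ x, |f x| ≤ M) ∧ (∃ M, ∀ x, ‖gradient f x‖ ≤ M)

/-- The `L²(μ)` norm of a real-valued function. -/
noncomputable def L2Norm {d : ℕ} (μ : Measure (EuclideanSpace ℝ (Fin d)))
    (f : EuclideanSpace ℝ (Fin d) → ℝ) : ℝ :=
  (∫ x, |f x| ^ (2 : ℝ) ∂μ) ^ ((1 : ℝ) / 2)

open Filter Topology

/-!
By duality, the integral of `exp g` outside a set `A` is controlled by the entropy of `exp g` and a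
term that is negligible once `μ Aᶜ` is small. If `μ` satisfies a logarithmic Sobolev inequality and
`g` is `L`-Lipschitz, the entropy of `exp g` is at most a multiple of `∫ exp g` itself, so at least
half of `∫ exp g` comes from `A`. Apply this to `g = λ h` with `h` a bounded smooth regularization
of the norm and `A` a large ball, and let `h` increase to `√(1 + ‖x‖²)`.
-/

section Entropy

variable {α : Type*} [MeasurableSpace α] {μ : Measure α}

lemma mul_le_mul_log_div_sub_add_mul_exp {a H : ℝ} (ha : 0 ≤ a) (hH : 0 < H) (b : ℝ) :
    b * a ≤ a * Real.log (a / H) - a + H * Real.exp b := by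
  rcases ha.eq_or_lt with rfl | ha
  · simp only [mul_zero, zero_mul, sub_zero, zero_add]
    positivity
  have tangent := Real.add_one_le_exp (b - Real.log (a / H))
  rw [Real.exp_sub, Real.exp_log (by positivity), le_div_iff₀ (by positivity)] at tangent
  calc b * a = ((b - Real.log (a / H) + 1) * (a / H)) * H + a * Real.log (a / H) - a := by
        field_simp; ring
    _ ≤ Real.exp b * H + a * Real.log (a / H) - a := by gcongr
    _ = a * Real.log (a / H) - a + H * Real.exp b := by ring

lemma mul_setIntegral_le_entropy_add [IsProbabilityMeasure μ] {F : α → ℝ} (hF : ∀ x, 0 ≤ F x)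
    (hFint : Integrable F μ) (hFpos : 0 < ∫ x, F x ∂μ)
    (hent : Integrable (fun x => F x * Real.log (F x / ∫ y, F y ∂μ)) μ)
    {A : Set α} (hA : MeasurableSet A) (K : ℝ) :
    K * ∫ x in A, F x ∂μ ≤
      ∫ x, F x * Real.log (F x / ∫ y, F y ∂μ) ∂μ +
        (∫ x, F x ∂μ) * (μ.real A * (Real.exp K - 1)) := by
  set H := ∫ x, F x ∂μ
  have hpenalty : Integrable (A.indicator fun _ => H * (Real.exp K - 1)) μ :=
    (integrable_const _).indicator hA
  have hdiff : Integrable (fun x => F x * Real.log (F x / H) - F x) μ := hent.sub hFint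
  have hshift : Integrable (fun x => H + A.indicator (fun _ => H * (Real.exp K - 1)) x) μ :=
    (integrable_const H).add hpenalty
  have pointwise : ∀ x, K * A.indicator F x ≤ F x * Real.log (F x / H) - F x +
      (H + A.indicator (fun _ => H * (Real.exp K - 1)) x) := by
    intro x
    by_cases hx : x ∈ A
    · have := mul_le_mul_log_div_sub_add_mul_exp (hF x) hFpos K
      simp only [Set.indicator_of_mem hx]
      linarith
    · have := mul_le_mul_log_div_sub_add_mul_exp (hF x) hFpos 0
      simp only [Set.indicator_of_notMem hx, Real.exp_zero] at this ⊢
      linarith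
  calc K * ∫ x in A, F x ∂μ = ∫ x, K * A.indicator F x ∂μ := by
        rw [integral_const_mul, integral_indicator hA]
    _ ≤ ∫ x, F x * Real.log (F x / H) - F x +
          (H + A.indicator (fun _ => H * (Real.exp K - 1)) x) ∂μ :=
        integral_mono ((hFint.indicator hA).const_mul K) (hdiff.add hshift) pointwise
    _ = ∫ x, F x * Real.log (F x / H) ∂μ - H + (H + μ.real A * (H * (Real.exp K - 1))) := by
        rw [integral_add hdiff hshift, integral_sub hent hFint,
          integral_add (integrable_const H) hpenalty, integral_indicator_const _ hA,
          integral_const, probReal_univ, one_smul, smul_eq_mul]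
    _ = ∫ x, F x * Real.log (F x / H) ∂μ + H * (μ.real A * (Real.exp K - 1)) := by ring

lemma integral_le_two_mul_setIntegral_of_entropy_le [IsProbabilityMeasure μ] {F : α → ℝ}
    (hF : ∀ x, 0 ≤ F x) (hFint : Integrable F μ) (hFpos : 0 < ∫ x, F x ∂μ)
    (hent : Integrable (fun x => F x * Real.log (F x / ∫ y, F y ∂μ)) μ)
    {κ : ℝ} (hκ : 0 ≤ κ)
    (hle : ∫ x, F x * Real.log (F x / ∫ y, F y ∂μ) ∂μ ≤ κ * ∫ x, F x ∂μ)
    {A : Set α} (hA : MeasurableSet A) (hμA : μ.real Aᶜ ≤ Real.exp (-(2 * κ + 2))) :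
    ∫ x, F x ∂μ ≤ 2 * ∫ x in A, F x ∂μ := by
  set H := ∫ x, F x ∂μ
  have hpenalty : μ.real Aᶜ * (Real.exp (2 * κ + 2) - 1) ≤ 1 :=
    calc μ.real Aᶜ * (Real.exp (2 * κ + 2) - 1)
        ≤ μ.real Aᶜ * Real.exp (2 * κ + 2) := by gcongr; linarith
      _ ≤ Real.exp (-(2 * κ + 2)) * Real.exp (2 * κ + 2) := by gcongr
      _ = 1 := by rw [← Real.exp_add, neg_add_cancel, Real.exp_zero]
  have hcompl : (2 * κ + 2) * ∫ x in Aᶜ, F x ∂μ ≤ (2 * κ + 2) * (H / 2) :=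
    calc (2 * κ + 2) * ∫ x in Aᶜ, F x ∂μ
        ≤ ∫ x, F x * Real.log (F x / H) ∂μ +
            H * (μ.real Aᶜ * (Real.exp (2 * κ + 2) - 1)) :=
          mul_setIntegral_le_entropy_add hF hFint hFpos hent hA.compl _
      _ ≤ κ * H + H * 1 := by gcongr
      _ = (2 * κ + 2) * (H / 2) := by ring
  have hhalf : ∫ x in Aᶜ, F x ∂μ ≤ H / 2 := le_of_mul_le_mul_left hcompl (by linarith)
  linarith [integral_add_compl hA hFint]

lemma integrable_comp_of_abs_le [IsFiniteMeasure μ] {φ : ℝ → ℝ} (hφ : Continuous φ) {g : α → ℝ}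
    (hg : AEStronglyMeasurable g μ) {M : ℝ} (hM : ∀ x, |g x| ≤ M) :
    Integrable (fun x => φ (g x)) μ := by
  obtain ⟨B, hB⟩ := (isCompact_Icc (a := -M) (b := M)).exists_bound_of_continuousOn hφ.continuousOn
  exact .of_bound (hφ.comp_aestronglyMeasurable hg) B
    (ae_of_all _ fun x => hB _ (abs_le.mp (hM x)))

end Entropy

section LogSobolev

variable {E : Type*} [NormedAddCommGroup E] [NormedSpace ℝ E]

lemma norm_fderiv_exp {g : E → ℝ} {x : E} (hg : DifferentiableAt ℝ g x) :
    ‖fderiv ℝ (fun y => Real.exp (g y)) x‖ = Real.exp (g x) * ‖fderiv ℝ g x‖ := by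
  rw [fderiv_exp hg, norm_smul, Real.norm_eq_abs, Real.abs_exp]

variable [MeasurableSpace E]

/-- The logarithmic Sobolev inequality with constant `C` for a measure on a normed space, tested on
bounded `C¹` functions with bounded derivative. The derivative is taken as a continuous linear form,
so that no inner product is needed. -/
def SatisfiesLSI (μ : Measure E) (C : ℝ) : Prop :=
  ∀ f : E → ℝ, ContDiff ℝ 1 f → (∃ M, ∀ x, |f x| ≤ M) → (∃ M, ∀ x, ‖fderiv ℝ f x‖ ≤ M) →
    ∫ x, f x ^ 2 * Real.log (|f x| / √(∫ y, f y ^ 2 ∂μ)) ∂μ ≤ C * ∫ x, ‖fderiv ℝ f x‖ ^ 2 ∂μ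

namespace SatisfiesLSI

variable {μ : Measure E} {C : ℝ}

lemma entropy_sq_le (h : SatisfiesLSI μ C) {f : E → ℝ} (hf : ContDiff ℝ 1 f)
    (hbdd : ∃ M, ∀ x, |f x| ≤ M) (hderiv : ∃ M, ∀ x, ‖fderiv ℝ f x‖ ≤ M) :
    ∫ x, f x ^ 2 * Real.log (f x ^ 2 / ∫ y, f y ^ 2 ∂μ) ∂μ ≤
      2 * C * ∫ x, ‖fderiv ℝ f x‖ ^ 2 ∂μ := by
  have hnorm : 0 ≤ ∫ y, f y ^ 2 ∂μ := integral_nonneg fun _ => sq_nonneg _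
  have hlog (x : E) : Real.log (f x ^ 2 / ∫ y, f y ^ 2 ∂μ) =
      2 * Real.log (|f x| / √(∫ y, f y ^ 2 ∂μ)) := by
    rw [← Real.sq_sqrt hnorm, ← sq_abs (f x), ← div_pow, Real.log_pow, Nat.cast_ofNat,
      Real.sq_sqrt hnorm]
  simp only [hlog, mul_left_comm _ (2 : ℝ), integral_const_mul, mul_assoc]
  gcongr
  exact h f hf hbdd hderiv

variable [OpensMeasurableSpace E] {g : E → ℝ} {M L : ℝ}

lemma entropy_exp_le [IsFiniteMeasure μ] (h : SatisfiesLSI μ C) (hC : 0 ≤ C) (hg : ContDiff ℝ 1 g)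
    (hM : ∀ x, |g x| ≤ M) (hL : ∀ x, ‖fderiv ℝ g x‖ ≤ L) :
    ∫ x, Real.exp (g x) * Real.log (Real.exp (g x) / ∫ y, Real.exp (g y) ∂μ) ∂μ ≤
      C * L ^ 2 / 2 * ∫ x, Real.exp (g x) ∂μ := by
  have hint : Integrable (fun x => Real.exp (g x)) μ :=
    integrable_comp_of_abs_le Real.continuous_exp hg.continuous.aestronglyMeasurable hM
  let f (x : E) : ℝ := Real.exp (g x / 2)
  have hf : ContDiff ℝ 1 f := (hg.div_const 2).exp
  have hf_sq (x : E) : f x ^ 2 = Real.exp (g x) := by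
    rw [← Real.exp_nat_mul, Nat.cast_ofNat, mul_div_cancel₀ _ two_ne_zero]
  have hf_le (x : E) : |f x| ≤ Real.exp (M / 2) := by
    rw [Real.abs_exp]; gcongr; exact le_of_abs_le (hM x)
  have hf_deriv (x : E) : ‖fderiv ℝ f x‖ ≤ |f x| * (L / 2) := by
    have hgx : DifferentiableAt ℝ g x := hg.differentiable one_ne_zero x
    have hhalf : ‖fderiv ℝ (fun y => g y / 2) x‖ = ‖fderiv ℝ g x‖ / 2 := by
      simp only [div_eq_inv_mul]
      rw [fderiv_const_mul hgx, norm_smul, Real.norm_of_nonneg (by norm_num)]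
    calc ‖fderiv ℝ f x‖ = Real.exp (g x / 2) * ‖fderiv ℝ (fun y => g y / 2) x‖ :=
          norm_fderiv_exp (by fun_prop)
      _ ≤ |f x| * (L / 2) := by
          rw [hhalf, Real.abs_exp]
          gcongr
          exact hL x
  have hf_deriv_bdd (x : E) : ‖fderiv ℝ f x‖ ≤ Real.exp (M / 2) * (L / 2) := by
    have hL_nonneg : 0 ≤ L := (norm_nonneg _).trans (hL 0)
    exact (hf_deriv x).trans (by gcongr; exact hf_le x)
  have henergy : ∫ x, ‖fderiv ℝ f x‖ ^ 2 ∂μ ≤ L ^ 2 / 4 * ∫ x, Real.exp (g x) ∂μ := by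
    rw [← integral_const_mul]
    refine integral_mono_of_nonneg (ae_of_all _ fun x => sq_nonneg _) (hint.const_mul _)
      (ae_of_all _ fun x => ?_)
    calc ‖fderiv ℝ f x‖ ^ 2 ≤ (|f x| * (L / 2)) ^ 2 := by gcongr; exact hf_deriv x
      _ = L ^ 2 / 4 * Real.exp (g x) := by rw [mul_pow, sq_abs, hf_sq]; ring
  calc ∫ x, Real.exp (g x) * Real.log (Real.exp (g x) / ∫ y, Real.exp (g y) ∂μ) ∂μ
      ≤ 2 * C * ∫ x, ‖fderiv ℝ f x‖ ^ 2 ∂μ := by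
        simpa only [hf_sq] using h.entropy_sq_le hf ⟨_, hf_le⟩ ⟨_, hf_deriv_bdd⟩
    _ ≤ 2 * C * (L ^ 2 / 4 * ∫ x, Real.exp (g x) ∂μ) := by gcongr
    _ = C * L ^ 2 / 2 * ∫ x, Real.exp (g x) ∂μ := by ring

lemma integral_exp_le [IsProbabilityMeasure μ] (h : SatisfiesLSI μ C) (hC : 0 ≤ C)
    (hg : ContDiff ℝ 1 g) (hM : ∀ x, |g x| ≤ M) (hL : ∀ x, ‖fderiv ℝ g x‖ ≤ L) {A : Set E}
    (hA : MeasurableSet A) (hμA : μ.real Aᶜ ≤ Real.exp (-(C * L ^ 2 + 2)))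
    {r : ℝ} (hr : ∀ x ∈ A, g x ≤ r) :
    ∫ x, Real.exp (g x) ∂μ ≤ 2 * Real.exp r := by
  have hgm : AEStronglyMeasurable g μ := hg.continuous.aestronglyMeasurable
  have hint : Integrable (fun x => Real.exp (g x)) μ :=
    integrable_comp_of_abs_le Real.continuous_exp hgm hM
  have hpos : 0 < ∫ x, Real.exp (g x) ∂μ := integral_exp_pos hint
  have hent : Integrable (fun x => Real.exp (g x) *
      Real.log (Real.exp (g x) / ∫ y, Real.exp (g y) ∂μ)) μ :=
    integrable_comp_of_abs_le (φ := fun t => Real.exp t * Real.log (Real.exp t / _))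
      (by fun_prop (disch := intros; positivity)) hgm hM
  calc ∫ x, Real.exp (g x) ∂μ ≤ 2 * ∫ x in A, Real.exp (g x) ∂μ :=
        integral_le_two_mul_setIntegral_of_entropy_le (fun x => (Real.exp_pos _).le) hint hpos hent
          (κ := C * L ^ 2 / 2) (by positivity) (h.entropy_exp_le hC hg hM hL) hA
          (by convert hμA using 3; ring)
    _ ≤ 2 * ∫ _ in A, Real.exp r ∂μ := by
        gcongr ?_ * ?_
        exact setIntegral_mono_on hint.integrableOn (integrable_const _) hA
          fun x hx => Real.exp_le_exp.mpr (hr x hx)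
    _ = 2 * (μ.real A * Real.exp r) := by rw [setIntegral_const, smul_eq_mul]
    _ ≤ 2 * Real.exp r := by
        gcongr
        exact mul_le_of_le_one_left (Real.exp_pos r).le measureReal_le_one

end SatisfiesLSI

end LogSobolev

section RegularizedNorm

variable {E : Type*} [NormedAddCommGroup E]

/-- A bounded smooth approximation of the norm: `√(1 + ‖x‖²)` smooths the norm at the origin, and
`y ↦ y / (1 + δ y)` truncates it at height `1 / δ`. -/
noncomputable def regularizedNorm (δ : ℝ) (x : E) : ℝ :=
  √(1 + ‖x‖ ^ 2) / (1 + δ * √(1 + ‖x‖ ^ 2))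

variable {δ : ℝ}

lemma regularizedNorm_nonneg (hδ : 0 ≤ δ) (x : E) : 0 ≤ regularizedNorm δ x := by
  unfold regularizedNorm; positivity

lemma regularizedNorm_le_inv (hδ : 0 < δ) (x : E) : regularizedNorm δ x ≤ δ⁻¹ := by
  rw [regularizedNorm, div_le_iff₀ (by positivity), mul_add, inv_mul_cancel_left₀ hδ.ne']
  linarith [inv_pos.mpr hδ]

lemma regularizedNorm_le_one_add_norm (hδ : 0 ≤ δ) (x : E) : regularizedNorm δ x ≤ 1 + ‖x‖ :=
  (div_le_self (by positivity) (le_add_of_nonneg_right (by positivity))).trans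
    (sqrt_one_add_norm_sq_le x)

lemma lipschitzWith_sqrt_one_add_norm_sq : LipschitzWith 1 fun x : E => √(1 + ‖x‖ ^ 2) := by
  refine .of_le_add fun x y => Real.sqrt_le_iff.mpr ⟨by positivity, ?_⟩
  have hy : ‖y‖ ≤ √(1 + ‖y‖ ^ 2) := Real.le_sqrt_of_sq_le (by linarith)
  have hxy : ‖x‖ ≤ ‖y‖ + dist x y := by
    rw [dist_eq_norm]; exact norm_le_norm_add_norm_sub' x y
  calc 1 + ‖x‖ ^ 2 ≤ 1 + (‖y‖ + dist x y) ^ 2 := by gcongr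
    _ = 1 + ‖y‖ ^ 2 + 2 * ‖y‖ * dist x y + dist x y ^ 2 := by ring
    _ ≤ 1 + ‖y‖ ^ 2 + 2 * √(1 + ‖y‖ ^ 2) * dist x y + dist x y ^ 2 := by gcongr
    _ = (√(1 + ‖y‖ ^ 2) + dist x y) ^ 2 := by
        rw [add_sq (√_), Real.sq_sqrt (by positivity)]

lemma lipschitzWith_regularizedNorm (hδ : 0 ≤ δ) :
    LipschitzWith 1 (regularizedNorm (E := E) δ) := by
  refine .of_dist_le_mul fun x y => ?_
  have hsqrt := lipschitzWith_sqrt_one_add_norm_sq.dist_le_mul x y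
  refine le_trans ?_ hsqrt
  unfold regularizedNorm
  set a := √(1 + ‖x‖ ^ 2)
  set b := √(1 + ‖y‖ ^ 2)
  have ha : 1 ≤ 1 + δ * a := le_add_of_nonneg_right (by positivity)
  have hb : 1 ≤ 1 + δ * b := le_add_of_nonneg_right (by positivity)
  rw [Real.dist_eq, Real.dist_eq]
  calc |a / (1 + δ * a) - b / (1 + δ * b)| = |a - b| / ((1 + δ * a) * (1 + δ * b)) := by
        rw [div_sub_div _ _ (by positivity) (by positivity), abs_div,
          abs_of_pos (by positivity : 0 < (1 + δ * a) * (1 + δ * b))]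
        ring_nf
    _ ≤ |a - b| := div_le_self (abs_nonneg _) (one_le_mul_of_one_le_of_one_le ha hb)

lemma contDiff_regularizedNorm [InnerProductSpace ℝ E] (hδ : 0 ≤ δ) {n : WithTop ℕ∞} :
    ContDiff ℝ n (regularizedNorm (E := E) δ) := by
  have hsqrt : ContDiff ℝ n fun x : E => √(1 + ‖x‖ ^ 2) :=
    (contDiff_const.add (contDiff_norm_sq ℝ)).sqrt fun x => by positivity
  exact hsqrt.div (contDiff_const.add (contDiff_const.mul hsqrt)) fun x => by positivity

lemma tendsto_regularizedNorm (x : E) :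
    Tendsto (fun δ : ℝ => regularizedNorm δ x) (𝓝 0) (𝓝 √(1 + ‖x‖ ^ 2)) := by
  have hcont : ContinuousAt (fun δ : ℝ => regularizedNorm δ x) 0 :=
    continuousAt_const.div (by fun_prop) (by simp)
  simpa [ContinuousAt, regularizedNorm] using hcont

lemma lintegral_exp_norm_le_of_regularizedNorm [MeasurableSpace E] [OpensMeasurableSpace E]
    {μ : Measure E} {lam : ℝ} (hlam : 0 ≤ lam) {M : ENNReal}
    (h : ∀ δ > 0, ∫⁻ x, ENNReal.ofReal (Real.exp (lam * regularizedNorm δ x)) ∂μ ≤ M) :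
    ∫⁻ x, ENNReal.ofReal (Real.exp (lam * ‖x‖)) ∂μ ≤ M := by
  let F (δ : ℝ) (x : E) := ENNReal.ofReal (Real.exp (lam * regularizedNorm δ x))
  have hF (δ : ℝ) : Measurable (F δ) := by unfold F regularizedNorm; fun_prop
  have hlim (x : E) : Tendsto (F · x) (𝓝[>] 0)
      (𝓝 (ENNReal.ofReal (Real.exp (lam * √(1 + ‖x‖ ^ 2))))) :=
    ENNReal.tendsto_ofReal
      (((tendsto_regularizedNorm x).mono_left nhdsWithin_le_nhds).const_mul lam).rexp
  calc ∫⁻ x, ENNReal.ofReal (Real.exp (lam * ‖x‖)) ∂μ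
      ≤ ∫⁻ x, liminf (F · x) (𝓝[>] 0) ∂μ := by
        gcongr with x
        rw [(hlim x).liminf_eq]
        gcongr
        exact Real.le_sqrt_of_sq_le (by linarith)
    _ ≤ liminf (fun δ => ∫⁻ x, F δ x ∂μ) (𝓝[>] 0) := lintegral_liminf_le hF
    _ ≤ M := liminf_le_of_frequently_le'
        (eventually_nhdsWithin_of_forall (s := Set.Ioi (0 : ℝ)) h).frequently

end RegularizedNorm

theorem exp_moment_bounded_of_LSI_general {E : Type*} [NormedAddCommGroup E]
    [InnerProductSpace ℝ E] [MeasurableSpace E] [OpensMeasurableSpace E]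
    {μ : Measure E} [IsProbabilityMeasure μ] {C : ℝ} (hC : 0 ≤ C) (hLSI : SatisfiesLSI μ C)
    {lam R : ℝ} (hlam : 0 ≤ lam)
    (hR : μ.real (Metric.ball 0 R)ᶜ ≤ Real.exp (-(C * lam ^ 2 + 2))) :
    ∫⁻ x, ENNReal.ofReal (Real.exp (lam * ‖x‖)) ∂μ ≤
      ENNReal.ofReal (2 * Real.exp (lam * (1 + R))) := by
  refine lintegral_exp_norm_le_of_regularizedNorm hlam fun δ hδ => ?_
  have hcont : ContDiff ℝ 1 fun x : E => lam * regularizedNorm δ x :=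
    contDiff_const.mul (contDiff_regularizedNorm hδ.le)
  have hbound (x : E) : |lam * regularizedNorm δ x| ≤ lam * δ⁻¹ := by
    rw [abs_of_nonneg (mul_nonneg hlam (regularizedNorm_nonneg hδ.le x))]
    gcongr
    exact regularizedNorm_le_inv hδ x
  have hderiv (x : E) : ‖fderiv ℝ (fun x => lam * regularizedNorm δ x) x‖ ≤ lam := by
    rw [fderiv_const_mul ((contDiff_regularizedNorm hδ.le).differentiable one_ne_zero x), norm_smul,
      Real.norm_of_nonneg hlam]
    exact mul_le_of_le_one_right hlam
      (norm_fderiv_le_of_lipschitz ℝ (lipschitzWith_regularizedNorm hδ.le))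
  rw [← ofReal_integral_eq_lintegral_ofReal (integrable_comp_of_abs_le Real.continuous_exp
    hcont.continuous.aestronglyMeasurable hbound) (ae_of_all _ fun x => (Real.exp_pos _).le)]
  refine ENNReal.ofReal_le_ofReal
    (hLSI.integral_exp_le hC hcont hbound hderiv measurableSet_ball hR fun x hx => ?_)
  gcongr
  refine (regularizedNorm_le_one_add_norm hδ.le x).trans ?_
  gcongr
  exact (mem_ball_zero_iff.mp hx).le

lemma satisfiesLSI_of_C1b {d : ℕ} {μ : Measure (EuclideanSpace ℝ (Fin d))} {C : ℝ}
    (h : ∀ f : EuclideanSpace ℝ (Fin d) → ℝ, C1b f →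
      ∫ x, (f x) ^ 2 * Real.log (|f x| / L2Norm μ f) ∂μ ≤ C * ∫ x, ‖gradient f x‖ ^ 2 ∂μ) :
    SatisfiesLSI μ C := by
  intro f hf hbdd hderiv
  have hgrad (x) : ‖gradient f x‖ = ‖fderiv ℝ f x‖ := LinearIsometryEquiv.norm_map _ _
  have hL2 : L2Norm μ f = √(∫ x, f x ^ 2 ∂μ) := by
    simp only [L2Norm, Real.rpow_two, sq_abs, Real.sqrt_eq_rpow]
  simpa only [hgrad, hL2] using h f ⟨hf, hbdd, by simpa only [hgrad] using hderiv⟩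

/-- a tight family of Borel probability measures on `ℝ^d` satisfying a
logarithmic Sobolev inequality with constant `C > 0` has uniformly bounded exponential
moments: for every `λ > 0`, `sup_s ∫ e^{λ|x|} dμ_s < ∞`. -/
theorem exp_moment_bounded_of_LSI
    {d : ℕ} {ι : Type*} [Nonempty ι]
    (μ : ι → Measure (EuclideanSpace ℝ (Fin d)))
    [∀ s, IsProbabilityMeasure (μ s)]
    (htight : ∀ ε > (0 : ℝ), ∃ R > (0 : ℝ), ∀ s,
      1 - ε ≤ ((μ s) (Metric.ball 0 R)).toReal)
    (C : ℝ) (hC : 0 < C)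
    (hLSI : ∀ s, ∀ f : EuclideanSpace ℝ (Fin d) → ℝ, C1b f →
      ∫ x, (f x) ^ 2 * Real.log (|f x| / L2Norm (μ s) f) ∂(μ s)
        ≤ C * ∫ x, ‖gradient f x‖ ^ 2 ∂(μ s)) :
    ∀ lam > (0 : ℝ), ∃ M : ℝ, ∀ s,
      ∫⁻ x, ENNReal.ofReal (Real.exp (lam * ‖x‖)) ∂(μ s) ≤ ENNReal.ofReal M := by
  intro lam hlam
  obtain ⟨R, -, hR⟩ := htight (Real.exp (-(C * lam ^ 2 + 2))) (Real.exp_pos _)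
  refine ⟨2 * Real.exp (lam * (1 + R)), fun s => ?_⟩
  refine exp_moment_bounded_of_LSI_general hC.le (satisfiesLSI_of_C1b (hLSI s)) hlam.le ?_
  rw [probReal_compl_eq_one_sub measurableSet_ball]
  exact sub_le_comm.mp (hR s)
end

section
/- Let I be a nonempty index set and let {μ_s : s ∈ I} be a tight family of Borel probability measures on ℝ^d satisfying the family of logarithmic Sobolev inequalities LSI_ε: there exists a decreasing function β : (0,∞) → (0,∞) such that ∫ f² log(|f|/‖f‖_{2,μ_s}) dμ_s ≤ ε ∫ |∇f|² dμ_s + β(ε) ‖f‖²_{2,μ_s} for every ε > 0, every s ∈ I and every f ∈ C¹_b(ℝ^d). Then for every λ > 0 one has sup_{s∈I} ∫_{ℝ^d} e^{λ|x|²} dμ_s(x) < +∞. -/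
open MeasureTheory

/-!
A set of mass at most `e^{-a}` forces every `f` supported in it to have entropy at least
`a ∫ f²` (Jensen). Testing the log-Sobolev inequality on a cutoff between `|x| = R` and
`|x| = R + h` therefore shows that, once `a` dominates the defect, a tail of mass `e^{-a}` beyond
`R` drops to mass `e^{-(a + 1)}` beyond `R + h` as soon as `h² a` exceeds a constant multiple
of `ε`. The increments `h = D (√(n + 1) - √n)` satisfy this with `a = n` when `D² / ε` is large, so
that the mass beyond `R + D √n` is at most `e^{-n}`. These are Gaussian tails with rate `1 / D²`,
and `D` may be taken arbitrarily small because `ε` is arbitrary.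
-/

section Entropy

variable {Ω : Type*} [MeasurableSpace Ω] {μ : Measure Ω} {A : Set Ω}

lemma integral_mul_log_integral_div_le {g : Ω → ℝ} (hA : μ A ≠ ⊤) (hg : Integrable g μ)
    (hglog : Integrable (fun x => g x * Real.log (g x)) μ) (hg0 : ∀ x, 0 ≤ g x)
    (hgA : ∀ x ∉ A, g x = 0) :
    (∫ x, g x ∂μ) * Real.log ((∫ x, g x ∂μ) / μ.real A) ≤ ∫ x, g x * Real.log (g x) ∂μ := by
  have hset : ∫ x in A, g x ∂μ = ∫ x, g x ∂μ := setIntegral_eq_integral_of_forall_compl_eq_zero hgA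
  have hset_log : ∫ x in A, g x * Real.log (g x) ∂μ = ∫ x, g x * Real.log (g x) ∂μ :=
    setIntegral_eq_integral_of_forall_compl_eq_zero fun x hx => by simp [hgA x hx]
  rcases eq_or_ne (μ A) 0 with hA0 | hA0
  · rw [← hset, ← hset_log]
    simp [Measure.restrict_eq_zero.2 hA0]
  have jensen := Real.convexOn_mul_log.map_set_average_le Real.continuous_mul_log.continuousOn
    isClosed_Ici hA0 hA (ae_of_all _ hg0) hg.integrableOn hglog.integrableOn
  have hApos : 0 < μ.real A := ENNReal.toReal_pos hA0 hA
  rw [setAverage_eq, setAverage_eq, hset, hset_log, smul_eq_mul, smul_eq_mul, mul_assoc] at jensen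
  rw [div_eq_inv_mul]
  exact le_of_mul_le_mul_left jensen (inv_pos.2 hApos)

variable [IsFiniteMeasure μ] {f : Ω → ℝ} {M : ℝ}

lemma integrable_sq_of_abs_le (hf : AEStronglyMeasurable f μ) (hM : ∀ x, |f x| ≤ M) :
    Integrable (fun x => f x ^ 2) μ :=
  .of_bound (hf.pow 2) (M ^ 2) <| ae_of_all _ fun x => by
    rw [norm_pow, Real.norm_eq_abs]
    exact pow_le_pow_left₀ (abs_nonneg _) (hM x) 2

lemma integrable_sq_mul_log_sq_of_abs_le (hf : AEStronglyMeasurable f μ) (hM : ∀ x, |f x| ≤ M) :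
    Integrable (fun x => f x ^ 2 * Real.log (f x ^ 2)) μ := by
  obtain ⟨K, hK⟩ := (isCompact_Icc (a := (0 : ℝ)) (b := M ^ 2)).exists_bound_of_continuousOn
    Real.continuous_mul_log.continuousOn
  exact .of_bound (Real.continuous_mul_log.comp_aestronglyMeasurable (hf.pow 2)) K <|
    ae_of_all _ fun x => hK _ ⟨sq_nonneg _, sq_le_sq' (abs_le.1 (hM x)).1 (abs_le.1 (hM x)).2⟩

lemma integral_sq_mul_log_abs_div_sqrt (hf : AEStronglyMeasurable f μ) (hM : ∀ x, |f x| ≤ M)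
    (hI : 0 < ∫ x, f x ^ 2 ∂μ) :
    ∫ x, f x ^ 2 * Real.log (|f x| / √(∫ y, f y ^ 2 ∂μ)) ∂μ
      = (∫ x, f x ^ 2 * Real.log (f x ^ 2) ∂μ
          - (∫ x, f x ^ 2 ∂μ) * Real.log (∫ x, f x ^ 2 ∂μ)) / 2 := by
  set I := ∫ x, f x ^ 2 ∂μ
  have pointwise (x : Ω) : f x ^ 2 * Real.log (|f x| / √I)
      = (f x ^ 2 * Real.log (f x ^ 2) - f x ^ 2 * Real.log I) / 2 := by
    rcases eq_or_ne (f x) 0 with hx | hx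
    · simp [hx]
    rw [Real.log_div (abs_ne_zero.2 hx) (Real.sqrt_ne_zero'.2 hI), Real.log_sqrt hI.le,
      Real.log_abs, Real.log_pow]
    push_cast
    ring
  simp_rw [pointwise]
  rw [integral_div, integral_sub (integrable_sq_mul_log_sq_of_abs_le hf hM)
    ((integrable_sq_of_abs_le hf hM).mul_const _), integral_mul_const]

lemma mul_integral_sq_le_integral_sq_mul_log {a : ℝ} (hf : AEStronglyMeasurable f μ)
    (hM : ∀ x, |f x| ≤ M) (hfA : ∀ x ∉ A, f x = 0) (hA : μ.real A ≤ Real.exp (-a)) :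
    a / 2 * ∫ x, f x ^ 2 ∂μ ≤ ∫ x, f x ^ 2 * Real.log (|f x| / √(∫ y, f y ^ 2 ∂μ)) ∂μ := by
  rcases (integral_nonneg fun x => sq_nonneg (f x) : 0 ≤ ∫ x, f x ^ 2 ∂μ).eq_or_lt with hI | hI
  · simp [← hI]
  have hApos : 0 < μ.real A := by
    refine measureReal_nonneg.lt_of_ne' fun h => hI.ne' ?_
    rw [← setIntegral_eq_integral_of_forall_compl_eq_zero (s := A) fun x hx => by simp [hfA x hx]]
    simp [Measure.restrict_eq_zero.2 ((measureReal_eq_zero_iff (measure_ne_top _ _)).1 h)]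
  have jensen := integral_mul_log_integral_div_le (measure_ne_top μ A)
    (integrable_sq_of_abs_le hf hM) (integrable_sq_mul_log_sq_of_abs_le hf hM)
    (fun x => sq_nonneg _) (fun x hx => by simp [hfA x hx])
  have hlogA : a ≤ -Real.log (μ.real A) := le_neg.1 ((Real.log_le_iff_le_exp hApos).2 hA)
  rw [Real.log_div hI.ne' hApos.ne'] at jensen
  rw [integral_sq_mul_log_abs_div_sqrt hf hM hI]
  nlinarith [mul_le_mul_of_nonneg_left hlogA hI.le]

end Entropy

lemma exists_abs_deriv_smoothTransition_le :
    ∃ C > (0 : ℝ), ∀ t ∈ Set.Icc (0 : ℝ) 1, |deriv Real.smoothTransition t| ≤ C := by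
  obtain ⟨C, hC⟩ := (isCompact_Icc (a := (0 : ℝ)) (b := 1)).exists_bound_of_continuousOn
    ((Real.smoothTransition.contDiff (n := 1)).continuous_deriv le_rfl).continuousOn
  exact ⟨max C 1, by positivity, fun t ht => (hC t ht).trans (le_max_left _ _)⟩

section RadialCutoff

variable {E : Type*} [NormedAddCommGroup E] {R h : ℝ} {x : E}

/-- The radial cutoff equal to `0` on the ball of radius `R` and to `1` outside the ball of radius
`R + h`. It interpolates in `‖x‖ ^ 2` because `‖x‖` is not differentiable at the origin. -/
noncomputable def radialCutoff (R h : ℝ) (x : E) : ℝ :=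
  Real.smoothTransition ((‖x‖ ^ 2 - R ^ 2) / ((R + h) ^ 2 - R ^ 2))

lemma radialCutoff_nonneg : 0 ≤ radialCutoff R h x := Real.smoothTransition.nonneg _

lemma radialCutoff_le_one : radialCutoff R h x ≤ 1 := Real.smoothTransition.le_one _

lemma abs_radialCutoff_le_one : |radialCutoff R h x| ≤ 1 :=
  abs_le.2 ⟨by linarith [radialCutoff_nonneg (R := R) (h := h) (x := x)], radialCutoff_le_one⟩

lemma radialCutoff_of_norm_le (hR : 0 ≤ R) (hh : 0 ≤ h) (hx : ‖x‖ ≤ R) :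
    radialCutoff R h x = 0 := by
  refine Real.smoothTransition.zero_of_nonpos (div_nonpos_of_nonpos_of_nonneg ?_ ?_)
  · linarith [pow_le_pow_left₀ (norm_nonneg x) hx 2]
  · nlinarith

lemma radialCutoff_of_le_norm (hR : 0 ≤ R) (hh : 0 < h) (hx : R + h ≤ ‖x‖) :
    radialCutoff R h x = 1 := by
  have hw : 0 < (R + h) ^ 2 - R ^ 2 := by nlinarith
  refine Real.smoothTransition.one_of_one_le ((one_le_div hw).2 ?_)
  linarith [pow_le_pow_left₀ (by positivity) hx 2]

variable [InnerProductSpace ℝ E]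

lemma contDiff_radialCutoff : ContDiff ℝ 1 (radialCutoff R h : E → ℝ) :=
  Real.smoothTransition.contDiff.comp (((contDiff_norm_sq ℝ).sub contDiff_const).div_const _)

lemma norm_fderiv_radialCutoff :
    ‖fderiv ℝ (radialCutoff R h) x‖
      = |deriv Real.smoothTransition ((‖x‖ ^ 2 - R ^ 2) / ((R + h) ^ 2 - R ^ 2))|
        * (2 * ‖x‖ / |(R + h) ^ 2 - R ^ 2|) := by
  set w := (R + h) ^ 2 - R ^ 2
  have inner_deriv : HasFDerivAt (fun y : E => (‖y‖ ^ 2 - R ^ 2) / w)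
      (w⁻¹ • (2 : ℝ) • innerSL ℝ x) x := by
    simpa only [div_eq_inv_mul, ofNat_smul_eq_nsmul] using
      ((hasStrictFDerivAt_norm_sq x).hasFDerivAt.sub_const (R ^ 2)).const_mul w⁻¹
  have outer_deriv := ((Real.smoothTransition.contDiff (n := 1)).differentiable one_ne_zero
    ((‖x‖ ^ 2 - R ^ 2) / w)).hasDerivAt
  have chain : fderiv ℝ (radialCutoff R h) x = _ :=
    (outer_deriv.comp_hasFDerivAt x inner_deriv).fderiv
  rw [chain, norm_smul, norm_smul, norm_smul, innerSL_apply_norm, norm_inv, Real.norm_eq_abs,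
    Real.norm_eq_abs, Real.norm_ofNat]
  ring

lemma exists_norm_fderiv_radialCutoff_le :
    ∃ C > (0 : ℝ), ∀ R h : ℝ, 0 ≤ R → 0 < h → ∀ x : E,
      ‖fderiv ℝ (radialCutoff R h) x‖ ≤ C / h := by
  obtain ⟨C, hC0, hC⟩ := exists_abs_deriv_smoothTransition_le
  refine ⟨2 * C, by positivity, fun R h hR hh x => ?_⟩
  rcases le_or_gt ‖x‖ R with hxR | hxR
  · have hmin : IsLocalMin (radialCutoff R h) x := .of_forall fun y => by
      rw [radialCutoff_of_norm_le hR hh.le hxR]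
      exact radialCutoff_nonneg
    rw [hmin.fderiv_eq_zero, norm_zero]
    positivity
  rcases le_or_gt (R + h) ‖x‖ with hxRh | hxRh
  · have hmax : IsLocalMax (radialCutoff R h) x := .of_forall fun y => by
      rw [radialCutoff_of_le_norm hR hh hxRh]
      exact radialCutoff_le_one
    rw [hmax.fderiv_eq_zero, norm_zero]
    positivity
  have hw : 0 < (R + h) ^ 2 - R ^ 2 := by nlinarith
  have harg : (‖x‖ ^ 2 - R ^ 2) / ((R + h) ^ 2 - R ^ 2) ∈ Set.Icc (0 : ℝ) 1 :=
    ⟨div_nonneg (by nlinarith) hw.le, (div_le_one hw).2 (by nlinarith [norm_nonneg x])⟩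
  have hslope : 2 * ‖x‖ / ((R + h) ^ 2 - R ^ 2) ≤ 2 / h := by
    rw [div_le_div_iff₀ hw hh]
    nlinarith
  calc ‖fderiv ℝ (radialCutoff R h) x‖
      ≤ C * (2 / h) := by
        rw [norm_fderiv_radialCutoff, abs_of_pos hw]
        exact mul_le_mul (hC _ harg) hslope (by positivity) hC0.le
    _ = 2 * C / h := by ring

end RadialCutoff

lemma one_third_le_sqrt_succ_sub_sqrt_mul_sqrt {t : ℝ} (ht : 1 ≤ t) :
    1 / 3 ≤ (√(t + 1) - √t) * √t := by
  have hp : √t ^ 2 = t := Real.sq_sqrt (by linarith)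
  have hq : √(t + 1) ^ 2 = t + 1 := Real.sq_sqrt (by linarith)
  have hp0 : 0 < √t := Real.sqrt_pos.2 (by linarith)
  have hpq : √t < √(t + 1) := Real.sqrt_lt_sqrt (by linarith) (by linarith)
  have hq2p : √(t + 1) ≤ 2 * √t := by nlinarith
  have conj : (√(t + 1) - √t) * (√(t + 1) + √t) = 1 := by linear_combination hq - hp
  nlinarith [conj, hp0]

section LogSobolev

variable {E : Type*} [NormedAddCommGroup E] [InnerProductSpace ℝ E] [MeasurableSpace E]

/-- The logarithmic Sobolev inequality with constant `ε` and defect `b`, tested on bounded `C¹`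
functions with bounded derivative. The norm of the gradient is written `‖fderiv ℝ f x‖`, so that
`E` need not be complete. -/
def DefectiveLogSobolev (μ : Measure E) (ε b : ℝ) : Prop :=
  ∀ f : E → ℝ, ContDiff ℝ 1 f → (∃ M, ∀ x, |f x| ≤ M) → (∃ M, ∀ x, ‖fderiv ℝ f x‖ ≤ M) →
    ∫ x, f x ^ 2 * Real.log (|f x| / √(∫ y, f y ^ 2 ∂μ)) ∂μ
      ≤ ε * ∫ x, ‖fderiv ℝ f x‖ ^ 2 ∂μ + b * ∫ x, f x ^ 2 ∂μ

namespace DefectiveLogSobolev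

variable [OpensMeasurableSpace E] {μ : Measure E} {ε b : ℝ}

lemma mul_integral_sq_le [IsFiniteMeasure μ] (hμ : DefectiveLogSobolev μ ε b) (hε : 0 ≤ ε)
    {f : E → ℝ} {A : Set E} {M L a : ℝ} (hf : ContDiff ℝ 1 f) (hf0 : ∀ x, 0 ≤ f x)
    (hfM : ∀ x, f x ≤ M) (hfL : ∀ x, ‖fderiv ℝ f x‖ ≤ L) (hA : MeasurableSet A)
    (hfA : ∀ x ∉ A, f x = 0) (hAa : μ.real A ≤ Real.exp (-a)) :
    (a / 2 - b) * ∫ x, f x ^ 2 ∂μ ≤ ε * (L ^ 2 * Real.exp (-a)) := by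
  have hfabs (x : E) : |f x| ≤ M := (abs_of_nonneg (hf0 x)).trans_le (hfM x)
  have entropy := mul_integral_sq_le_integral_sq_mul_log
    hf.continuous.aestronglyMeasurable hfabs hfA hAa
  have energy : ∫ x, ‖fderiv ℝ f x‖ ^ 2 ∂μ ≤ L ^ 2 * Real.exp (-a) := calc
    _ ≤ ∫ x, A.indicator (fun _ => L ^ 2) x ∂μ := by
      refine integral_mono_of_nonneg (ae_of_all _ fun x => sq_nonneg _)
        ((integrable_const _).indicator hA) (ae_of_all _ fun x => ?_)
      by_cases hx : x ∈ A
      · simpa [hx] using pow_le_pow_left₀ (norm_nonneg _) (hfL x) 2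
      · have hmin : IsLocalMin f x := .of_forall fun y => (hfA x hx).trans_le (hf0 y)
        simp [hx, hmin.fderiv_eq_zero]
    _ = L ^ 2 * μ.real A := by rw [integral_indicator_const _ hA, smul_eq_mul, mul_comm]
    _ ≤ L ^ 2 * Real.exp (-a) := by gcongr
  linarith [hμ f hf ⟨M, hfabs⟩ ⟨L, hfL⟩, mul_le_mul_of_nonneg_left energy hε]

variable [IsProbabilityMeasure μ] {C : ℝ}

lemma measureReal_compl_ball_add_le (hμ : DefectiveLogSobolev μ ε b) (hε : 0 ≤ ε) {R h a : ℝ}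
    (hC : ∀ x : E, ‖fderiv ℝ (radialCutoff R h) x‖ ≤ C / h) (hR : 0 ≤ R) (hh : 0 < h) (ha : 0 < a)
    (hab : 4 * b ≤ a) (hεa : 12 * ε * C ^ 2 ≤ h ^ 2 * a)
    (htail : μ.real (Metric.ball 0 R)ᶜ ≤ Real.exp (-a)) :
    μ.real (Metric.ball 0 (R + h))ᶜ ≤ Real.exp (-(a + 1)) := by
  set I := ∫ x : E, radialCutoff R h x ^ 2 ∂μ
  have key : (a / 2 - b) * I ≤ ε * ((C / h) ^ 2 * Real.exp (-a)) :=
    hμ.mul_integral_sq_le hε contDiff_radialCutoff (fun _ => radialCutoff_nonneg)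
      (fun _ => radialCutoff_le_one) hC measurableSet_ball.compl
      (fun x hx => radialCutoff_of_norm_le hR hh.le (mem_ball_zero_iff.1 (not_not.1 hx)).le) htail
  have tail_le : μ.real (Metric.ball 0 (R + h))ᶜ ≤ I := by
    rw [← integral_indicator_one measurableSet_ball.compl]
    refine integral_mono ((integrable_const 1).indicator measurableSet_ball.compl)
      (integrable_sq_of_abs_le contDiff_radialCutoff.continuous.aestronglyMeasurable
        fun _ => abs_radialCutoff_le_one)
      (Set.indicator_le' (fun x hx => ?_) fun x _ => sq_nonneg _)
    simp [radialCutoff_of_le_norm hR hh (by simpa using hx)]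
  have hI : 0 ≤ I := measureReal_nonneg.trans tail_le
  have hεC : ε * (C / h) ^ 2 ≤ a / 12 := by
    rw [div_pow, ← mul_div_assoc, div_le_iff₀ (by positivity)]
    linarith
  have I_le : I * 3 ≤ Real.exp (-a) := by
    refine le_of_mul_le_mul_left ?_ ha
    nlinarith [mul_le_mul_of_nonneg_right hεC (Real.exp_pos (-a)).le]
  calc μ.real (Metric.ball 0 (R + h))ᶜ
      ≤ Real.exp (-a) / 3 := by linarith
    _ ≤ Real.exp (-a) / Real.exp 1 := by gcongr; exact Real.exp_one_lt_three.le
    _ = Real.exp (-(a + 1)) := by rw [← Real.exp_sub]; ring_nf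

lemma measureReal_compl_ball_add_mul_sqrt_le (hμ : DefectiveLogSobolev μ ε b) (hε : 0 ≤ ε)
    {R D : ℝ} {n₀ : ℕ}
    (hC : ∀ R h : ℝ, 0 ≤ R → 0 < h → ∀ x : E, ‖fderiv ℝ (radialCutoff R h) x‖ ≤ C / h)
    (hR : 0 ≤ R) (hD : 0 < D) (hn₀ : 0 < n₀) (hb : 4 * b ≤ n₀) (hεD : 12 * ε * C ^ 2 ≤ (D / 3) ^ 2)
    (htail : μ.real (Metric.ball 0 R)ᶜ ≤ Real.exp (-n₀)) {n : ℕ} (hn : n₀ ≤ n) :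
    μ.real (Metric.ball 0 (R + D * √n))ᶜ ≤ Real.exp (-n) := by
  induction n, hn using Nat.le_induction with
  | base =>
    refine (measureReal_mono (Set.compl_subset_compl.2 (Metric.ball_subset_ball ?_))).trans htail
    exact le_add_of_nonneg_right (by positivity)
  | succ n hn ih =>
    have hn₀n : (n₀ : ℝ) ≤ n := by exact_mod_cast hn
    have hn1 : (1 : ℝ) ≤ n := by exact_mod_cast hn₀.trans_le hn
    have hgap : 0 < √((n : ℝ) + 1) - √n :=
      sub_pos.2 (Real.sqrt_lt_sqrt n.cast_nonneg (lt_add_one _))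
    have hεn : 12 * ε * C ^ 2 ≤ (D * (√((n : ℝ) + 1) - √n)) ^ 2 * n := calc
      _ ≤ (D * (1 / 3)) ^ 2 := by rwa [mul_one_div]
      _ ≤ (D * ((√((n : ℝ) + 1) - √n) * √n)) ^ 2 := by
        gcongr
        exact one_third_le_sqrt_succ_sub_sqrt_mul_sqrt hn1
      _ = (D * (√((n : ℝ) + 1) - √n)) ^ 2 * n := by
        rw [← mul_assoc, mul_pow, Real.sq_sqrt n.cast_nonneg]
    have hR' : 0 ≤ R + D * √n := by positivity
    have hh : 0 < D * (√((n : ℝ) + 1) - √n) := mul_pos hD hgap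
    have := hμ.measureReal_compl_ball_add_le hε (hC _ _ hR' hh) hR' hh (by linarith)
      (hb.trans hn₀n) hεn ih
    rwa [add_assoc, ← mul_add, add_sub_cancel, ← Nat.cast_add_one] at this

end DefectiveLogSobolev

end LogSobolev

section Moments

lemma lintegral_exp_mul_le_of_tail {Ω : Type*} [MeasurableSpace Ω] {μ : Measure Ω} {X : Ω → ℝ}
    {θ K : ℝ} (hX : Measurable X) (hX0 : ∀ x, 0 ≤ X x) (hθ0 : 0 ≤ θ) (hθ1 : θ < 1) (hK : 0 ≤ K)
    (htail : ∀ n : ℕ, μ {x | n ≤ X x} ≤ ENNReal.ofReal (K * Real.exp (-n))) :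
    ∫⁻ x, ENNReal.ofReal (Real.exp (θ * X x)) ∂μ
      ≤ ENNReal.ofReal (Real.exp θ * K * (1 - Real.exp (θ - 1))⁻¹) := by
  let layer (n : ℕ) : Set Ω := {x | n ≤ X x}
  let height (n : ℕ) : ENNReal := ENNReal.ofReal (Real.exp (θ * (n + 1)))
  have hlayer (n : ℕ) : MeasurableSet (layer n) := measurableSet_le measurable_const hX
  have pointwise (x : Ω) : ENNReal.ofReal (Real.exp (θ * X x))
      ≤ ∑' n, (layer n).indicator (fun _ => height n) x := by
    refine le_trans ?_ (ENNReal.le_tsum ⌊X x⌋₊)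
    rw [Set.indicator_of_mem (show x ∈ layer ⌊X x⌋₊ from Nat.floor_le (hX0 x))]
    have := (Nat.lt_floor_add_one (X x)).le
    simp only [height]
    gcongr
  have hratio : Real.exp (θ - 1) < 1 := Real.exp_lt_one_iff.2 (by linarith)
  calc ∫⁻ x, ENNReal.ofReal (Real.exp (θ * X x)) ∂μ
      ≤ ∫⁻ x, ∑' n, (layer n).indicator (fun _ => height n) x ∂μ := lintegral_mono pointwise
    _ = ∑' n, height n * μ (layer n) := by
      rw [lintegral_tsum fun n => (measurable_const.indicator (hlayer n)).aemeasurable]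
      simp_rw [lintegral_indicator_const (hlayer _)]
    _ ≤ ∑' n : ℕ, ENNReal.ofReal (Real.exp θ * K * Real.exp (θ - 1) ^ n) := by
      refine ENNReal.tsum_le_tsum fun n => (mul_le_mul_right (htail n) _).trans_eq ?_
      rw [← ENNReal.ofReal_mul (Real.exp_nonneg _), ← Real.exp_nat_mul, mul_left_comm,
        ← Real.exp_add, mul_comm (Real.exp θ), mul_assoc, ← Real.exp_add]
      ring_nf
    _ = ENNReal.ofReal (Real.exp θ * K * (1 - Real.exp (θ - 1))⁻¹) := by
      rw [← ENNReal.ofReal_tsum_of_nonneg (fun n => by positivity)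
        ((summable_geometric_of_lt_one (Real.exp_nonneg _) hratio).mul_left _), tsum_mul_left,
        tsum_geometric_of_lt_one (Real.exp_nonneg _) hratio]

lemma measure_natCast_le_sq_div_le {E : Type*} [SeminormedAddCommGroup E] [MeasurableSpace E]
    {μ : Measure E} [IsProbabilityMeasure μ] {R D : ℝ} {n₀ : ℕ} (hD : 0 < D) (hn₀ : 0 < n₀)
    (htail : ∀ n : ℕ, n₀ ≤ n → μ.real (Metric.ball 0 (R + D * √n))ᶜ ≤ Real.exp (-n)) (n : ℕ) :
    μ {x | n ≤ (max (‖x‖ - R) 0 / D) ^ 2} ≤ ENNReal.ofReal (Real.exp n₀ * Real.exp (-n)) := by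
  rw [← ofReal_measureReal]
  refine ENNReal.ofReal_le_ofReal ?_
  rw [← Real.exp_add]
  rcases lt_or_ge n n₀ with hn | hn
  · have : (n : ℝ) ≤ n₀ := by exact_mod_cast hn.le
    exact measureReal_le_one.trans (Real.one_le_exp (by linarith))
  have subset : {x : E | n ≤ (max (‖x‖ - R) 0 / D) ^ 2} ⊆ (Metric.ball 0 (R + D * √n))ᶜ := by
    intro x (hx : n ≤ (max (‖x‖ - R) 0 / D) ^ 2)
    have hsqrt : √n * D ≤ max (‖x‖ - R) 0 :=
      (le_div_iff₀ hD).1 (Real.sqrt_le_iff.2 ⟨by positivity, hx⟩)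
    have hpos : 0 < √n * D := mul_pos (Real.sqrt_pos.2 (by exact_mod_cast hn₀.trans_le hn)) hD
    have hnorm : √n * D ≤ ‖x‖ - R := (le_max_iff.1 hsqrt).resolve_right hpos.not_ge
    simp only [Set.mem_compl_iff, mem_ball_zero_iff, not_lt]
    linarith
  calc μ.real {x : E | n ≤ (max (‖x‖ - R) 0 / D) ^ 2}
      ≤ Real.exp (-n) := (measureReal_mono subset).trans (htail n hn)
    _ ≤ Real.exp (n₀ + -n) := Real.exp_le_exp.2 (le_add_of_nonneg_left n₀.cast_nonneg)

lemma lintegral_exp_mul_sq_norm_le_of_tail {E : Type*} [SeminormedAddCommGroup E]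
    [MeasurableSpace E] [OpensMeasurableSpace E] {μ : Measure E} [IsProbabilityMeasure μ]
    {R D lam : ℝ} {n₀ : ℕ} (hD : 0 < D) (hlam : 0 ≤ lam) (hlamD : 4 * lam * D ^ 2 ≤ 1)
    (hn₀ : 0 < n₀)
    (htail : ∀ n : ℕ, n₀ ≤ n → μ.real (Metric.ball 0 (R + D * √n))ᶜ ≤ Real.exp (-n)) :
    ∫⁻ x, ENNReal.ofReal (Real.exp (lam * ‖x‖ ^ 2)) ∂μ
      ≤ ENNReal.ofReal (Real.exp (2 * lam * R ^ 2)
          * (Real.exp (1 / 2) * Real.exp n₀ * (1 - Real.exp (1 / 2 - 1))⁻¹)) := by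
  set X : E → ℝ := fun x => (max (‖x‖ - R) 0 / D) ^ 2 with hX
  have hX_meas : Measurable X := by fun_prop
  have exponent_le (x : E) : lam * ‖x‖ ^ 2 ≤ 2 * lam * R ^ 2 + 1 / 2 * X x := by
    have hDX : D ^ 2 * X x = max (‖x‖ - R) 0 ^ 2 := by simp only [hX]; field_simp
    have hnorm : ‖x‖ ^ 2 ≤ 2 * R ^ 2 + 2 * max (‖x‖ - R) 0 ^ 2 := by
      rcases le_total (‖x‖ - R) 0 with h | h
      · rw [max_eq_right h]
        nlinarith [norm_nonneg x]
      · rw [max_eq_left h]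
        nlinarith [sq_nonneg (‖x‖ - 2 * R)]
    have := mul_le_mul_of_nonneg_right hlamD (show 0 ≤ X x from sq_nonneg _)
    nlinarith [mul_le_mul_of_nonneg_left hnorm hlam]
  calc ∫⁻ x, ENNReal.ofReal (Real.exp (lam * ‖x‖ ^ 2)) ∂μ
      ≤ ∫⁻ x, ENNReal.ofReal (Real.exp (2 * lam * R ^ 2))
          * ENNReal.ofReal (Real.exp (1 / 2 * X x)) ∂μ := by
        refine lintegral_mono fun x => ?_
        rw [← ENNReal.ofReal_mul (Real.exp_nonneg _), ← Real.exp_add]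
        exact ENNReal.ofReal_le_ofReal (Real.exp_le_exp.2 (exponent_le x))
    _ = ENNReal.ofReal (Real.exp (2 * lam * R ^ 2))
          * ∫⁻ x, ENNReal.ofReal (Real.exp (1 / 2 * X x)) ∂μ :=
        lintegral_const_mul _ (by fun_prop)
    _ ≤ _ := by
        rw [ENNReal.ofReal_mul (Real.exp_nonneg _)]
        gcongr
        exact lintegral_exp_mul_le_of_tail hX_meas (fun x => sq_nonneg _) (by norm_num)
          (by norm_num) (Real.exp_nonneg _) (measure_natCast_le_sq_div_le hD hn₀ htail)

end Moments

theorem gaussian_moment_bounded_of_LSIeps_general {E : Type*} [NormedAddCommGroup E]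
    [InnerProductSpace ℝ E] [MeasurableSpace E] [OpensMeasurableSpace E] {ι : Type*}
    (μ : ι → Measure E) [∀ s, IsProbabilityMeasure (μ s)]
    (htight : ∀ δ > (0 : ℝ), ∃ R > (0 : ℝ), ∀ s, 1 - δ ≤ (μ s).real (Metric.ball 0 R))
    (hLSI : ∀ ε > (0 : ℝ), ∃ b, ∀ s, DefectiveLogSobolev (μ s) ε b)
    (lam : ℝ) (hlam : 0 < lam) :
    ∃ M : ℝ, ∀ s,
      ∫⁻ x, ENNReal.ofReal (Real.exp (lam * ‖x‖ ^ 2)) ∂(μ s) ≤ ENNReal.ofReal M := by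
  obtain ⟨C, hC0, hC⟩ := exists_norm_fderiv_radialCutoff_le (E := E)
  obtain ⟨D, hD, hlamD⟩ : ∃ D > 0, 4 * lam * D ^ 2 ≤ 1 :=
    ⟨1 / (2 * √lam), by positivity, by
      rw [div_pow, mul_pow, Real.sq_sqrt hlam.le]; field_simp; norm_num⟩
  obtain ⟨ε, hε, hεD⟩ : ∃ ε > 0, 12 * ε * C ^ 2 ≤ (D / 3) ^ 2 :=
    ⟨(D / 3) ^ 2 / (12 * C ^ 2), by positivity, by field_simp; rfl⟩
  obtain ⟨b, hb⟩ := hLSI ε hε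
  obtain ⟨n₀, hn₀⟩ := exists_nat_ge (max 1 (4 * b))
  have hn₀_pos : 0 < n₀ := by exact_mod_cast (le_max_left _ _).trans hn₀
  obtain ⟨R, hR, hball⟩ := htight (Real.exp (-n₀)) (Real.exp_pos _)
  refine ⟨_, fun s => lintegral_exp_mul_sq_norm_le_of_tail (R := R) hD hlam.le hlamD hn₀_pos
    fun n hn => (hb s).measureReal_compl_ball_add_mul_sqrt_le hε.le hC hR.le hD hn₀_pos
      ((le_max_right _ _).trans hn₀) hεD ?_ hn⟩
  rw [probReal_compl_eq_one_sub measurableSet_ball]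
  linarith [hball s]

lemma L2Norm_eq_sqrt {d : ℕ} (μ : Measure (EuclideanSpace ℝ (Fin d)))
    (f : EuclideanSpace ℝ (Fin d) → ℝ) : L2Norm μ f = √(∫ x, f x ^ 2 ∂μ) := by
  simp [L2Norm, Real.sqrt_eq_rpow]

lemma norm_gradient_eq_norm_fderiv {F : Type*} [NormedAddCommGroup F] [InnerProductSpace ℝ F]
    [CompleteSpace F] (f : F → ℝ) (x : F) : ‖gradient f x‖ = ‖fderiv ℝ f x‖ :=
  LinearIsometryEquiv.norm_map _ _

lemma defectiveLogSobolev_of_C1b {d : ℕ} {μ : Measure (EuclideanSpace ℝ (Fin d))} {ε b : ℝ}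
    (hLSI : ∀ f : EuclideanSpace ℝ (Fin d) → ℝ, C1b f →
      ∫ x, f x ^ 2 * Real.log (|f x| / L2Norm μ f) ∂μ
        ≤ ε * ∫ x, ‖gradient f x‖ ^ 2 ∂μ + b * L2Norm μ f ^ 2) :
    DefectiveLogSobolev μ ε b := by
  intro f hf hbdd hgrad
  have hsq : 0 ≤ ∫ x, f x ^ 2 ∂μ := integral_nonneg fun x => sq_nonneg _
  simpa only [L2Norm_eq_sqrt, norm_gradient_eq_norm_fderiv, Real.sq_sqrt hsq] using
    hLSI f ⟨hf, hbdd, by simpa only [norm_gradient_eq_norm_fderiv] using hgrad⟩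

/-- a tight family of Borel probability measures on `ℝ^d` satisfying the
family of logarithmic Sobolev inequalities LSI_ε (with a decreasing defect function β)
has uniformly bounded Gaussian moments: for every `λ > 0`,
`sup_s ∫ e^{λ|x|²} dμ_s < ∞`. -/
theorem gaussian_moment_bounded_of_LSIeps
    {d : ℕ} {ι : Type*} [Nonempty ι]
    (μ : ι → Measure (EuclideanSpace ℝ (Fin d)))
    [∀ s, IsProbabilityMeasure (μ s)]
    (htight : ∀ ε > (0 : ℝ), ∃ R > (0 : ℝ), ∀ s,
      1 - ε ≤ ((μ s) (Metric.ball 0 R)).toReal)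
    (β : ℝ → ℝ) (hβpos : ∀ ε > (0 : ℝ), 0 < β ε)
    (hβdec : ∀ ε₁ ε₂ : ℝ, 0 < ε₁ → ε₁ ≤ ε₂ → β ε₂ ≤ β ε₁)
    (hLSI : ∀ ε > (0 : ℝ), ∀ s, ∀ f : EuclideanSpace ℝ (Fin d) → ℝ, C1b f →
      ∫ x, (f x) ^ 2 * Real.log (|f x| / L2Norm (μ s) f) ∂(μ s)
        ≤ ε * ∫ x, ‖gradient f x‖ ^ 2 ∂(μ s) + β ε * (L2Norm (μ s) f) ^ 2) :
    ∀ lam > (0 : ℝ), ∃ M : ℝ, ∀ s,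
      ∫⁻ x, ENNReal.ofReal (Real.exp (lam * ‖x‖ ^ 2)) ∂(μ s) ≤ ENNReal.ofReal M :=
  gaussian_moment_bounded_of_LSIeps_general μ htight
    fun ε hε => ⟨β ε, fun s => defectiveLogSobolev_of_C1b (hLSI ε hε s)⟩
end

section
/- Let (Ω, μ) be a probability space, f : Ω → [0,∞) measurable, and λ, C, M > 0 be such that e^{λf} ∈ L²(μ), ∫ e^{2λf} dμ ≤ e^{Cλ²} (∫ e^{λf} dμ)², and μ({x : λ f(x) ≥ M}) ≤ (4 e^{Cλ²})^{-1}. Then ∫ e^{λf} dμ ≤ 2 e^{M}. -/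
open MeasureTheory

/-!
Put `g = exp (λ f)`, `K = exp (C λ²)` and `A = {g ≥ exp M}`. The integral of `g` off `A` is at most
`exp M`. By Cauchy–Schwarz its integral over `A` is at most `√(μ A * ∫ g²)`, and the bounds
`∫ g² ≤ K (∫ g)²` and `μ A ≤ 1 / (4 K)` make this at most `(∫ g) / 2`, which is absorbed into the
left-hand side of `∫ g ≤ exp M + (∫ g) / 2`.
-/

section Truncation

variable {Ω : Type*} [MeasurableSpace Ω] {μ : Measure Ω} {f g : Ω → ℝ}

theorem sq_integral_mul_le_integral_sq_mul_integral_sq (hf : MemLp f 2 μ) (hg : MemLp g 2 μ) :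
    (∫ x, f x * g x ∂μ) ^ 2 ≤ (∫ x, f x ^ 2 ∂μ) * ∫ x, g x ^ 2 ∂μ := by
  have inner_toLp {u v : Ω → ℝ} (hu : MemLp u 2 μ) (hv : MemLp v 2 μ) :
      inner ℝ (hu.toLp u) (hv.toLp v) = ∫ x, u x * v x ∂μ := by
    rw [L2.inner_def]
    refine integral_congr_ae ?_
    filter_upwards [hu.coeFn_toLp, hv.coeFn_toLp] with x hux hvx
    rw [hux, hvx, real_inner_comm, RCLike.inner_apply, conj_trivial]
  simpa only [inner_toLp, ← sq] using real_inner_mul_inner_self_le (hf.toLp f) (hg.toLp g)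

theorem sq_setIntegral_le_measureReal_mul_integral_sq {A : Set Ω} (hA : μ A ≠ ⊤)
    (hg : MemLp g 2 μ) : (∫ x in A, g x ∂μ) ^ 2 ≤ μ.real A * ∫ x, g x ^ 2 ∂μ := by
  have : IsFiniteMeasure (μ.restrict A) := isFiniteMeasure_restrict.mpr hA
  calc (∫ x in A, g x ∂μ) ^ 2 ≤ μ.real A * ∫ x in A, g x ^ 2 ∂μ := by
        simpa using sq_integral_mul_le_integral_sq_mul_integral_sq
          (memLp_const (1 : ℝ)) (hg.restrict A)
    _ ≤ μ.real A * ∫ x, g x ^ 2 ∂μ := by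
        gcongr ?_ * ?_
        exact setIntegral_le_integral hg.integrable_sq (.of_forall fun x ↦ sq_nonneg (g x))

variable [IsFiniteMeasure μ] {a : ℝ}

theorem integral_le_mul_measureReal_univ_add_sqrt (ha : 0 ≤ a) (hg : MemLp g 2 μ) :
    ∫ x, g x ∂μ ≤ a * μ.real Set.univ + √(μ.real {x | a ≤ g x} * ∫ x, g x ^ 2 ∂μ) := by
  set A := {x | a ≤ g x}
  have hA : NullMeasurableSet A μ := nullMeasurableSet_le aemeasurable_const hg.aemeasurable
  have hint : Integrable g μ := hg.integrable one_le_two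
  have integral_compl_le : ∫ x in Aᶜ, g x ∂μ ≤ a * μ.real Set.univ := by
    calc ∫ x in Aᶜ, g x ∂μ ≤ ∫ _ in Aᶜ, a ∂μ :=
          setIntegral_mono_on₀ hint.integrableOn integrableOn_const hA.compl
            fun _ hx ↦ (not_le.mp (Set.notMem_ofPred_iff.mp hx)).le
      _ = a * μ.real Aᶜ := by rw [setIntegral_const, smul_eq_mul, mul_comm]
      _ ≤ a * μ.real Set.univ :=
          mul_le_mul_of_nonneg_left (measureReal_mono (Set.subset_univ _)) ha
  have integral_le_sqrt : ∫ x in A, g x ∂μ ≤ √(μ.real A * ∫ x, g x ^ 2 ∂μ) :=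
    Real.le_sqrt_of_sq_le <|
      sq_setIntegral_le_measureReal_mul_integral_sq (measure_ne_top μ A) hg
  linarith [integral_add_compl₀ hA hint]

theorem one_sub_mul_integral_le_of_integral_sq_le {K θ : ℝ} (ha : 0 ≤ a) (hθ : 0 ≤ θ)
    (hg : MemLp g 2 μ) (hg0 : 0 ≤ ∫ x, g x ∂μ)
    (hsq : ∫ x, g x ^ 2 ∂μ ≤ K * (∫ x, g x ∂μ) ^ 2)
    (htail : K * μ.real {x | a ≤ g x} ≤ θ ^ 2) :
    (1 - θ) * ∫ x, g x ∂μ ≤ a * μ.real Set.univ := by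
  have sqrt_le : √(μ.real {x | a ≤ g x} * ∫ x, g x ^ 2 ∂μ) ≤ θ * ∫ x, g x ∂μ := by
    refine Real.sqrt_le_iff.mpr ⟨by positivity, ?_⟩
    calc μ.real {x | a ≤ g x} * ∫ x, g x ^ 2 ∂μ
        ≤ μ.real {x | a ≤ g x} * (K * (∫ x, g x ∂μ) ^ 2) := by gcongr
      _ = K * μ.real {x | a ≤ g x} * (∫ x, g x ∂μ) ^ 2 := by ring
      _ ≤ θ ^ 2 * (∫ x, g x ∂μ) ^ 2 := by gcongr
      _ = (θ * ∫ x, g x ∂μ) ^ 2 := by ring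
  linarith [integral_le_mul_measureReal_univ_add_sqrt ha hg]

end Truncation

theorem exp_moment_bound_of_doubling_and_tail_general
    {Ω : Type*} [MeasurableSpace Ω] (μ : Measure Ω) [IsFiniteMeasure μ]
    (f : Ω → ℝ) (lam C M : ℝ)
    (hL2 : MemLp (fun x => Real.exp (lam * f x)) 2 μ)
    (hdoubling : ∫ x, Real.exp (2 * lam * f x) ∂μ
      ≤ Real.exp (C * lam ^ 2) * (∫ x, Real.exp (lam * f x) ∂μ) ^ 2)
    (htail : μ {x | M ≤ lam * f x}
      ≤ ENNReal.ofReal ((4 * Real.exp (C * lam ^ 2))⁻¹)) :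
    ∫ x, Real.exp (lam * f x) ∂μ ≤ 2 * Real.exp M * μ.real Set.univ := by
  have exp_sq (x : Ω) : Real.exp (lam * f x) ^ 2 = Real.exp (2 * lam * f x) := by
    rw [← Real.exp_nat_mul, Nat.cast_ofNat, mul_assoc]
  have tail_le : Real.exp (C * lam ^ 2) * μ.real {x | Real.exp M ≤ Real.exp (lam * f x)}
      ≤ (1 / 2) ^ 2 := by
    simp only [Real.exp_le_exp]
    calc Real.exp (C * lam ^ 2) * μ.real {x | M ≤ lam * f x}
        ≤ Real.exp (C * lam ^ 2) * (4 * Real.exp (C * lam ^ 2))⁻¹ := by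
          gcongr
          exact ENNReal.toReal_le_of_le_ofReal (by positivity) htail
      _ = (1 / 2) ^ 2 := by field_simp; norm_num
  have half_integral_le := one_sub_mul_integral_le_of_integral_sq_le (Real.exp_nonneg M)
    one_half_pos.le hL2 (integral_nonneg fun x ↦ Real.exp_nonneg _)
    (by simpa only [exp_sq] using hdoubling) tail_le
  linarith

/-- if `f ≥ 0`, `e^{λf} ∈ L²(μ)`,
`∫ e^{2λf} dμ ≤ e^{Cλ²}(∫ e^{λf} dμ)²` and `μ(λf ≥ M) ≤ (4e^{Cλ²})⁻¹`,
then `∫ e^{λf} dμ ≤ 2e^M`. -/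
theorem exp_moment_bound_of_doubling_and_tail
    {Ω : Type*} [MeasurableSpace Ω] (μ : Measure Ω) [IsProbabilityMeasure μ]
    (f : Ω → ℝ) (hmeas : Measurable f) (hf0 : ∀ x, 0 ≤ f x)
    (lam C M : ℝ) (hlam : 0 < lam) (hC : 0 < C) (hM : 0 < M)
    (hL2 : MemLp (fun x => Real.exp (lam * f x)) 2 μ)
    (hdoubling : ∫ x, Real.exp (2 * lam * f x) ∂μ
      ≤ Real.exp (C * lam ^ 2) * (∫ x, Real.exp (lam * f x) ∂μ) ^ 2)
    (htail : μ {x | M ≤ lam * f x}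
      ≤ ENNReal.ofReal ((4 * Real.exp (C * lam ^ 2))⁻¹)) :
    ∫ x, Real.exp (lam * f x) ∂μ ≤ 2 * Real.exp M := by
  simpa using exp_moment_bound_of_doubling_and_tail_general μ f lam C M hL2 hdoubling htail
end

section
/- Let I ⊆ ℝ be an interval, 0 < η₀ < Λ, K > 0, β > 0, R > 1, λ > 0 and 0 ≤ δ ≤ β. Let Q : I → Sym(d,ℝ) satisfy η₀|ξ|² ≤ ⟨Q(t)ξ, ξ⟩ ≤ Λ|ξ|² for all t ∈ I and ξ ∈ ℝ^d, and let b : I × ℝ^d → ℝ^d satisfy ⟨b(t,x), x⟩ ≤ −K|x|²(log|x|²)^β for all t ∈ I and all x with |x| ≥ R. Define ψ(x) := exp(λ|x|²(log|x|²)^δ) for |x| > 1. If either (δ = β and λ < K/(2Λ)) or δ < β, then there exist constants a > 0, γ > 0 and R' ≥ R such that Tr(Q(t) D²ψ(x)) + ⟨b(t,x), ∇ψ(x)⟩ ≤ a − γ ψ(x) for all t ∈ I and all x with |x| ≥ R'. -/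
open MeasureTheory
open scoped RealInnerProductSpace

/-- The second order operator `Tr(Q D²ψ(x)) + ⟨v, ∇ψ(x)⟩` applied to `ψ` at `x`,
where `Q` is a (symmetric) continuous linear operator on `ℝ^d` and `v ∈ ℝ^d`.
Here `Tr(Q D²ψ(x)) = ∑ᵢ D²ψ(x)(Q eᵢ, eᵢ)` for the standard orthonormal basis `eᵢ`. -/
noncomputable def ellOp {d : ℕ}
    (Q : EuclideanSpace ℝ (Fin d) →L[ℝ] EuclideanSpace ℝ (Fin d))
    (v : EuclideanSpace ℝ (Fin d)) (ψ : EuclideanSpace ℝ (Fin d) → ℝ)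
    (x : EuclideanSpace ℝ (Fin d)) : ℝ :=
  (∑ i : Fin d,
    fderiv ℝ (fun y => fderiv ℝ ψ y) x (Q (EuclideanSpace.single i 1))
      (EuclideanSpace.single i 1))
  + fderiv ℝ ψ x v

/-! On a radial function `exp (g (|x|²))` the operator acts as multiplication by
`4 (g'² + g'') ⟪Q x, x⟫ + 2 g' (Tr Q + ⟪v, x⟫)`, with `g'` and `g''` taken at `s = |x|²`.
For `g s = λ s (log s)^δ` the dominant terms are `4 Λ s g'²`, of order `s (log s)^(2δ)`, and
`-2 K s g' (log s)^β`, of order `s (log s)^(δ+β)`. The drift wins if `δ < β`, and also if `δ = β`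
and `2Λλ < K`; in both cases the multiplier tends to `-∞`, so every `γ` is admissible. -/

open Filter Topology Bornology

section Radial

variable {E : Type*} [NormedAddCommGroup E] [InnerProductSpace ℝ E]

lemma hasFDerivAt_comp_norm_sq {f : ℝ → ℝ} {f' : ℝ} {x : E} (hf : HasDerivAt f f' (‖x‖ ^ 2)) :
    HasFDerivAt (fun y : E => f (‖y‖ ^ 2)) ((2 * f') • innerSL ℝ x) x := by
  refine (hf.comp_hasFDerivAt x (hasStrictFDerivAt_norm_sq x).hasFDerivAt).congr_fderiv ?_
  rw [← Nat.cast_smul_eq_nsmul ℝ, smul_smul, mul_comm f', Nat.cast_ofNat]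

lemma fderiv_fderiv_comp_norm_sq {f f' : ℝ → ℝ} {f'' : ℝ} {x : E}
    (hf : ∀ᶠ s in 𝓝 (‖x‖ ^ 2), HasDerivAt f (f' s) s) (hf' : HasDerivAt f' f'' (‖x‖ ^ 2))
    (u v : E) :
    fderiv ℝ (fun y => fderiv ℝ (fun z : E => f (‖z‖ ^ 2)) y) x u v =
      4 * f'' * (⟪x, u⟫ * ⟪v, x⟫) + 2 * f' (‖x‖ ^ 2) * ⟪u, v⟫ := by
  have hnorm : Tendsto (fun y : E => ‖y‖ ^ 2) (𝓝 x) (𝓝 (‖x‖ ^ 2)) :=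
    (continuous_norm.pow 2).continuousAt
  have hgrad : (fun y => fderiv ℝ (fun z : E => f (‖z‖ ^ 2)) y) =ᶠ[𝓝 x]
      fun y => (2 * f' (‖y‖ ^ 2)) • innerSL ℝ y :=
    (hnorm.eventually hf).mono fun _ hy => (hasFDerivAt_comp_norm_sq hy).fderiv
  have hinner : HasFDerivAt (fun y : E => innerSL ℝ y) (innerSL ℝ : E →L[ℝ] E →L[ℝ] ℝ) x :=
    (innerSL ℝ : E →L[ℝ] E →L[ℝ] ℝ).hasFDerivAt
  have hhess : HasFDerivAt (fun y : E => (2 * f' (‖y‖ ^ 2)) • innerSL ℝ y) _ x :=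
    ((hasFDerivAt_comp_norm_sq hf').const_mul 2).smul hinner
  -- `innerSL_apply_apply` misses this: its `innerSL` is typed as semilinear over `starRingEnd ℝ`.
  have hinner_apply : (innerSL ℝ : E →L[ℝ] E →L[ℝ] ℝ) u v = ⟪u, v⟫ := rfl
  rw [hgrad.fderiv_eq, hhess.fderiv]
  simp only [add_apply, FunLike.coe_smul, Pi.smul_apply,
    ContinuousLinearMap.smulRight_apply, innerSL_apply_apply, smul_eq_mul, hinner_apply,
    real_inner_comm x v]
  ring

end Radial

lemma sum_inner_map_mul_inner {𝕜 ι E F : Type*} [RCLike 𝕜] [Fintype ι]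
    [NormedAddCommGroup E] [InnerProductSpace 𝕜 E] [SeminormedAddCommGroup F]
    [InnerProductSpace 𝕜 F] (e : OrthonormalBasis ι 𝕜 E) (T : E →ₗ[𝕜] F) (x : F) (y : E) :
    ∑ i, inner 𝕜 x (T (e i)) * inner 𝕜 (e i) y = inner 𝕜 x (T y) := by
  conv_rhs => rw [← e.sum_repr' y, map_sum, inner_sum]
  exact Finset.sum_congr rfl fun i _ => by rw [map_smul, inner_smul_right, mul_comm]

lemma trace_le_finrank_mul_of_inner_le {E : Type*} [NormedAddCommGroup E] [InnerProductSpace ℝ E]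
    [FiniteDimensional ℝ E] {T : E →ₗ[ℝ] E} {Λ : ℝ} (hT : ∀ ξ, ⟪T ξ, ξ⟫ ≤ Λ * ‖ξ‖ ^ 2) :
    LinearMap.trace ℝ E T ≤ Module.finrank ℝ E * Λ := by
  have hdiag (i) : ⟪stdOrthonormalBasis ℝ E i, T (stdOrthonormalBasis ℝ E i)⟫ ≤ Λ := by
    simpa [real_inner_comm] using hT (stdOrthonormalBasis ℝ E i)
  rw [T.trace_eq_sum_inner (stdOrthonormalBasis ℝ E)]
  simpa using Finset.sum_le_sum fun i (_ : i ∈ Finset.univ) => hdiag i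

section EllOp

variable {d : ℕ} {Q : EuclideanSpace ℝ (Fin d) →L[ℝ] EuclideanSpace ℝ (Fin d)}
  {v x : EuclideanSpace ℝ (Fin d)}

lemma ellOp_congr {φ ψ : EuclideanSpace ℝ (Fin d) → ℝ} (h : φ =ᶠ[𝓝 x] ψ) :
    ellOp Q v φ x = ellOp Q v ψ x := by
  rw [ellOp, ellOp, h.fderiv.fderiv_eq, h.fderiv_eq]

lemma ellOp_comp_norm_sq {f f' : ℝ → ℝ} {f'' : ℝ}
    (hf : ∀ᶠ s in 𝓝 (‖x‖ ^ 2), HasDerivAt f (f' s) s) (hf' : HasDerivAt f' f'' (‖x‖ ^ 2)) :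
    ellOp Q v (fun y => f (‖y‖ ^ 2)) x =
      4 * f'' * ⟪Q x, x⟫ + 2 * f' (‖x‖ ^ 2) * (LinearMap.trace ℝ _ Q.toLinearMap + ⟪v, x⟫) := by
  have hquad := sum_inner_map_mul_inner (EuclideanSpace.basisFun (Fin d) ℝ) Q.toLinearMap x x
  have htrace := Q.toLinearMap.trace_eq_sum_inner (EuclideanSpace.basisFun (Fin d) ℝ)
  simp only [EuclideanSpace.basisFun_apply, ContinuousLinearMap.coe_coe] at hquad htrace
  simp only [ellOp, fderiv_fderiv_comp_norm_sq hf hf',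
    (hasFDerivAt_comp_norm_sq hf.self_of_nhds).fderiv, Finset.sum_add_distrib, ← Finset.mul_sum,
    hquad, htrace, FunLike.coe_smul, Pi.smul_apply, innerSL_apply_apply, smul_eq_mul,
    real_inner_comm v x, real_inner_comm _ (Q _)]
  ring

lemma ellOp_exp_comp_norm_sq {g g' : ℝ → ℝ} {g'' : ℝ}
    (hg : ∀ᶠ s in 𝓝 (‖x‖ ^ 2), HasDerivAt g (g' s) s) (hg' : HasDerivAt g' g'' (‖x‖ ^ 2)) :
    ellOp Q v (fun y => Real.exp (g (‖y‖ ^ 2))) x =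
      (4 * (g' (‖x‖ ^ 2) ^ 2 + g'') * ⟪Q x, x⟫ +
        2 * g' (‖x‖ ^ 2) * (LinearMap.trace ℝ _ Q.toLinearMap + ⟪v, x⟫)) *
      Real.exp (g (‖x‖ ^ 2)) := by
  rw [ellOp_comp_norm_sq (hg.mono fun _ hs => hs.exp) (hg.self_of_nhds.exp.mul hg')]
  ring

lemma ellOp_exp_comp_norm_sq_le {g g' : ℝ → ℝ} {g'' Λ κ : ℝ}
    (hg : ∀ᶠ s in 𝓝 (‖x‖ ^ 2), HasDerivAt g (g' s) s) (hg' : HasDerivAt g' g'' (‖x‖ ^ 2))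
    (hg'_nonneg : 0 ≤ g' (‖x‖ ^ 2)) (hg'_sq_nonneg : 0 ≤ g' (‖x‖ ^ 2) ^ 2 + g'')
    (hQ : ∀ ξ, ⟪Q ξ, ξ⟫ ≤ Λ * ‖ξ‖ ^ 2) (hv : ⟪v, x⟫ ≤ κ) :
    ellOp Q v (fun y => Real.exp (g (‖y‖ ^ 2))) x ≤
      (4 * (g' (‖x‖ ^ 2) ^ 2 + g'') * (Λ * ‖x‖ ^ 2) + 2 * g' (‖x‖ ^ 2) * (d * Λ + κ)) *
      Real.exp (g (‖x‖ ^ 2)) := by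
  have htrace : LinearMap.trace ℝ _ Q.toLinearMap ≤ d * Λ := by
    simpa using trace_le_finrank_mul_of_inner_le (T := Q.toLinearMap) hQ
  rw [ellOp_exp_comp_norm_sq hg hg']
  gcongr
  exact hQ x

end EllOp

/-- The exponent `s ↦ λ s (log s)^δ` of the Lyapunov function, in the variable `s = |x|²`. -/
noncomputable def logPow (lam δ s : ℝ) : ℝ :=
  lam * s * Real.log s ^ δ

/-- The first derivative of `logPow lam δ` on `(1, ∞)`, written as its leading term times a factor
tending to `1`. -/
noncomputable def logPowDeriv (lam δ s : ℝ) : ℝ :=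
  lam * Real.log s ^ δ * (1 + δ / Real.log s)

/-- The second derivative of `logPow lam δ` on `(1, ∞)`, written as `lam * (log s)^δ / s` times a
factor tending to `0`. -/
noncomputable def logPowDeriv₂ (lam δ s : ℝ) : ℝ :=
  lam * Real.log s ^ δ / s * (δ / Real.log s * (1 + (δ - 1) / Real.log s))

section LogPow

variable {lam δ s : ℝ}

lemma hasDerivAt_log_rpow (hs : 1 < s) :
    HasDerivAt (fun s => Real.log s ^ δ) (δ * Real.log s ^ δ / (s * Real.log s)) s := by
  have hlog : Real.log s ≠ 0 := (Real.log_pos hs).ne'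
  refine ((Real.hasDerivAt_log (by positivity)).rpow_const (Or.inl hlog)).congr_deriv ?_
  rw [Real.rpow_sub_one hlog]
  field_simp

lemma hasDerivAt_logPow (hs : 1 < s) :
    HasDerivAt (logPow lam δ) (logPowDeriv lam δ s) s := by
  have hlog : Real.log s ≠ 0 := (Real.log_pos hs).ne'
  refine (((hasDerivAt_id s).const_mul lam).mul (hasDerivAt_log_rpow hs)).congr_deriv ?_
  rw [logPowDeriv, id]
  field_simp

lemma hasDerivAt_logPowDeriv (hs : 1 < s) :
    HasDerivAt (logPowDeriv lam δ) (logPowDeriv₂ lam δ s) s := by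
  have hlog : Real.log s ≠ 0 := (Real.log_pos hs).ne'
  have hfactor : HasDerivAt (fun s => 1 + δ / Real.log s) (-δ / (s * Real.log s ^ 2)) s := by
    refine (((hasDerivAt_const s δ).div (Real.hasDerivAt_log (by positivity)) hlog).const_add
      1).congr_deriv ?_
    field_simp
    ring
  refine (((hasDerivAt_log_rpow hs).const_mul lam).mul hfactor).congr_deriv ?_
  rw [logPowDeriv₂]
  field_simp
  ring

end LogPow

section Asymptotics

lemma tendsto_one_add_div_log (c : ℝ) :
    Tendsto (fun s => 1 + c / Real.log s) atTop (𝓝 1) := by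
  simpa using (tendsto_const_nhds.div_atTop Real.tendsto_log_atTop).const_add 1

lemma tendsto_log_rpow_div_self (p : ℝ) :
    Tendsto (fun s => Real.log s ^ p / s) atTop (𝓝 0) := by
  simpa using (isLittleO_log_rpow_rpow_atTop p one_pos).tendsto_div_nhds_zero

lemma tendsto_self_mul_log_rpow (p : ℝ) :
    Tendsto (fun s => s * Real.log s ^ p) atTop atTop := by
  have hpos : ∀ᶠ s in atTop, 0 < Real.log s ^ (-p) / s := by
    filter_upwards [eventually_gt_atTop 1] with s hs
    have := Real.log_pos hs
    positivity
  refine (tendsto_nhdsWithin_iff.2 ⟨tendsto_log_rpow_div_self (-p), hpos⟩).inv_tendsto_nhdsGT_zero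
    |>.congr' ?_
  filter_upwards [eventually_gt_atTop 1] with s hs
  simp [Real.rpow_neg (Real.log_pos hs).le]

lemma tendsto_logPowDeriv₂_factor (δ : ℝ) :
    Tendsto (fun s => δ / Real.log s * (1 + (δ - 1) / Real.log s)) atTop (𝓝 0) := by
  simpa using (tendsto_const_nhds.div_atTop Real.tendsto_log_atTop).mul
    (tendsto_one_add_div_log (δ - 1))

variable {lam δ : ℝ}

lemma eventually_logPowDeriv_nonneg (hlam : 0 < lam) :
    ∀ᶠ s in atTop, 0 ≤ logPowDeriv lam δ s := by
  filter_upwards [eventually_gt_atTop 1,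
    (tendsto_one_add_div_log δ).eventually_const_lt one_pos] with s hs hfactor
  have := Real.log_pos hs
  rw [logPowDeriv]
  positivity

lemma eventually_sq_logPowDeriv_add_nonneg (hlam : 0 < lam) :
    ∀ᶠ s in atTop, 0 ≤ logPowDeriv lam δ s ^ 2 + logPowDeriv₂ lam δ s := by
  have hfactor : Tendsto (fun s => lam * (1 + δ / Real.log s) ^ 2 +
      Real.log s ^ (-δ) / s * (δ / Real.log s * (1 + (δ - 1) / Real.log s))) atTop (𝓝 lam) := by
    simpa using (((tendsto_one_add_div_log δ).pow 2).const_mul lam).add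
      ((tendsto_log_rpow_div_self (-δ)).mul (tendsto_logPowDeriv₂_factor δ))
  filter_upwards [eventually_gt_atTop 1, hfactor.eventually_const_lt hlam] with s hs hpos
  have hlog := Real.log_pos hs
  refine (mul_pos (by positivity : 0 < lam * (Real.log s ^ δ) ^ 2) hpos).le.trans_eq ?_
  rw [logPowDeriv, logPowDeriv₂, Real.rpow_neg hlog.le]
  field_simp

variable {Λ K β : ℝ}

lemma exists_tendsto_rpow_sub_and_mul_lt
    (hcase : (δ = β ∧ 2 * Λ * lam < K) ∨ (δ < β ∧ 0 < K)) :
    ∃ l, Tendsto (fun L : ℝ => L ^ (δ - β)) atTop (𝓝 l) ∧ 2 * Λ * lam * l < K := by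
  rcases hcase with ⟨rfl, hlam⟩ | ⟨hδβ, hK⟩
  · exact ⟨1, by simp, by simpa using hlam⟩
  · exact ⟨0, by simpa using tendsto_rpow_neg_atTop (sub_pos.2 hδβ), by simpa using hK⟩

lemma tendsto_logPow_multiplier_atBot (hlam : 0 < lam)
    (hcase : (δ = β ∧ 2 * Λ * lam < K) ∨ (δ < β ∧ 0 < K)) (n : ℝ) :
    Tendsto (fun s => 4 * (logPowDeriv lam δ s ^ 2 + logPowDeriv₂ lam δ s) * (Λ * s) +
      2 * logPowDeriv lam δ s * (n * Λ + -K * s * Real.log s ^ β)) atTop atBot := by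
  obtain ⟨l, hl, hlK⟩ := exists_tendsto_rpow_sub_and_mul_lt hcase
  let u : ℝ → ℝ := fun s => 1 + δ / Real.log s
  let w : ℝ → ℝ := fun s => δ / Real.log s * (1 + (δ - 1) / Real.log s)
  -- the multiplier divided by `2 λ s (log s)^(δ+β)`, the order of its drift term
  let bracket : ℝ → ℝ := fun s => 2 * Λ * lam * Real.log s ^ (δ - β) * u s ^ 2 +
    Real.log s ^ (-β) / s * (2 * Λ * w s + n * Λ * u s) - K * u s
  have hu : Tendsto u atTop (𝓝 1) := tendsto_one_add_div_log δ
  have hw : Tendsto w atTop (𝓝 0) := tendsto_logPowDeriv₂_factor δ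
  have hbracket : Tendsto bracket atTop (𝓝 (2 * Λ * lam * l - K)) := by
    have hratio := (hl.comp Real.tendsto_log_atTop).const_mul (2 * Λ * lam)
    simpa using ((hratio.mul (hu.pow 2)).add ((tendsto_log_rpow_div_self (-β)).mul
      ((hw.const_mul (2 * Λ)).add (hu.const_mul (n * Λ))))).sub (hu.const_mul K)
  have hscale : Tendsto (fun s => 2 * lam * (s * Real.log s ^ (δ + β))) atTop atTop :=
    (tendsto_self_mul_log_rpow (δ + β)).const_mul_atTop (by positivity)
  refine (hscale.atTop_mul_neg (sub_neg.2 hlK) hbracket).congr' ?_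
  filter_upwards [eventually_gt_atTop 1] with s hs
  have hlog := Real.log_pos hs
  simp only [bracket, u, w, logPowDeriv, logPowDeriv₂, Real.rpow_add hlog, Real.rpow_sub hlog,
    Real.rpow_neg hlog.le]
  field_simp
  ring

end Asymptotics

theorem lyapunov_log_power_general {d : ℕ} {Λ K β lam δ : ℝ} (hlam : 0 < lam)
    {ψ : EuclideanSpace ℝ (Fin d) → ℝ}
    (hψ : ∀ x, 1 < ‖x‖ → ψ x = Real.exp (lam * ‖x‖ ^ 2 * Real.log (‖x‖ ^ 2) ^ δ))
    (hcase : (δ = β ∧ 2 * Λ * lam < K) ∨ (δ < β ∧ 0 < K)) (γ : ℝ) :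
    ∀ᶠ x in cobounded (EuclideanSpace ℝ (Fin d)),
      ∀ (Q : EuclideanSpace ℝ (Fin d) →L[ℝ] EuclideanSpace ℝ (Fin d))
        (v : EuclideanSpace ℝ (Fin d)), (∀ ξ, ⟪Q ξ, ξ⟫ ≤ Λ * ‖ξ‖ ^ 2) →
        ⟪v, x⟫ ≤ -K * ‖x‖ ^ 2 * Real.log (‖x‖ ^ 2) ^ β → ellOp Q v ψ x ≤ -γ * ψ x := by
  have hnorm : Tendsto norm (cobounded (EuclideanSpace ℝ (Fin d))) atTop :=
    tendsto_norm_cobounded_atTop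
  have hsq := (tendsto_pow_atTop two_ne_zero).comp hnorm
  filter_upwards [hnorm.eventually_gt_atTop 1,
    hsq.eventually (eventually_logPowDeriv_nonneg hlam),
    hsq.eventually (eventually_sq_logPowDeriv_add_nonneg hlam),
    hsq.eventually ((tendsto_logPow_multiplier_atBot hlam hcase d).eventually_le_atBot (-γ))]
    with x hx hderiv hderiv₂ hmultiplier Q v hQ hv
  have hx_sq : 1 < ‖x‖ ^ 2 := one_lt_pow₀ hx two_ne_zero
  have hψx : ψ =ᶠ[𝓝 x] fun y => Real.exp (logPow lam δ (‖y‖ ^ 2)) :=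
    (continuous_norm.continuousAt.eventually (lt_mem_nhds hx)).mono hψ
  have hbound := ellOp_exp_comp_norm_sq_le ((lt_mem_nhds hx_sq).mono fun _ => hasDerivAt_logPow)
    (hasDerivAt_logPowDeriv hx_sq) hderiv hderiv₂ hQ hv
  rw [ellOp_congr hψx, hψx.eq_of_nhds]
  exact hbound.trans (mul_le_mul_of_nonneg_right hmultiplier (Real.exp_pos _).le)

/-- Lyapunov-type estimate for `ψ(x) = exp(λ|x|²(log|x|²)^δ)` under the
drift condition `⟨b(t,x),x⟩ ≤ −K|x|²(log|x|²)^β`, when either `δ = β` and `λ < K/(2Λ)`,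
or `δ < β`. -/
theorem lyapunov_log_power
    {d : ℕ} (hd : 1 ≤ d) (I : Set ℝ) (hIconn : I.OrdConnected)
    (η₀ Λ K β R lam δ : ℝ)
    (hη₀ : 0 < η₀) (hηΛ : η₀ < Λ) (hK : 0 < K) (hβ : 0 < β) (hR : 1 < R)
    (hlam : 0 < lam) (hδ0 : 0 ≤ δ) (hδβ : δ ≤ β)
    (Q : ℝ → EuclideanSpace ℝ (Fin d) →L[ℝ] EuclideanSpace ℝ (Fin d))
    (hQsym : ∀ t ∈ I, ∀ ξ η : EuclideanSpace ℝ (Fin d), ⟪Q t ξ, η⟫ = ⟪ξ, Q t η⟫)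
    (hQell : ∀ t ∈ I, ∀ ξ : EuclideanSpace ℝ (Fin d),
      η₀ * ‖ξ‖ ^ 2 ≤ ⟪Q t ξ, ξ⟫ ∧ ⟪Q t ξ, ξ⟫ ≤ Λ * ‖ξ‖ ^ 2)
    (b : ℝ → EuclideanSpace ℝ (Fin d) → EuclideanSpace ℝ (Fin d))
    (hb : ∀ t ∈ I, ∀ x : EuclideanSpace ℝ (Fin d), R ≤ ‖x‖ →
      ⟪b t x, x⟫ ≤ -K * ‖x‖ ^ 2 * Real.log (‖x‖ ^ 2) ^ β)
    (ψ : EuclideanSpace ℝ (Fin d) → ℝ)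
    (hψ : ∀ x : EuclideanSpace ℝ (Fin d), 1 < ‖x‖ →
      ψ x = Real.exp (lam * ‖x‖ ^ 2 * Real.log (‖x‖ ^ 2) ^ δ))
    (hcase : (δ = β ∧ lam < K / (2 * Λ)) ∨ δ < β) :
    ∃ a > (0 : ℝ), ∃ γ > (0 : ℝ), ∃ R' : ℝ, R ≤ R' ∧
      ∀ t ∈ I, ∀ x : EuclideanSpace ℝ (Fin d), R' ≤ ‖x‖ →
        ellOp (Q t) (b t x) ψ x ≤ a - γ * ψ x := by
  have hcase' : (δ = β ∧ 2 * Λ * lam < K) ∨ (δ < β ∧ 0 < K) :=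
    hcase.imp (And.imp_right fun h => by rwa [lt_div_iff₀' (by linarith)] at h) (⟨·, hK⟩)
  obtain ⟨R₀, -, hR₀⟩ := hasBasis_cobounded_norm.eventually_iff.1
    (lyapunov_log_power_general hlam hψ hcase' 1)
  refine ⟨1, one_pos, 1, one_pos, max R R₀, le_max_left _ _, fun t ht x hx => ?_⟩
  obtain ⟨hxR, hxR₀⟩ := max_le_iff.1 hx
  linarith [hR₀ hxR₀ (Q t) (b t x) (fun ξ => (hQell t ht ξ).2) (hb t ht x hxR)]
end

section
/- Let I ⊆ ℝ be an interval, 0 < η₀ < Λ, K₂ > 0, α > 1, R₀ > 1. Let Q : I → Sym(d,ℝ) satisfy η₀|ξ|² ≤ ⟨Q(t)ξ, ξ⟩ ≤ Λ|ξ|² for all t ∈ I and ξ ∈ ℝ^d, and let b : I × ℝ^d → ℝ^d satisfy ⟨b(t,x), x⟩ ≤ −K₂|x|²(log|x|)^α for all t ∈ I and all x with |x| ≥ R₀. Then for every λ > 0 there exist a constant c > 0 and a convex nondecreasing function h : [0,∞) → ℝ, positive on [c,∞) with ∫_c^∞ dy/h(y) < +∞, such that Tr(Q(t) D²φ_λ(x))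 + ⟨b(t,x), ∇φ_λ(x)⟩ ≤ −h(φ_λ(x)) for all t ∈ I and all x with |x| ≥ R₀, where φ_λ(x) := e^{λ|x|²}. -/
open MeasureTheory
open scoped RealInnerProductSpace

/-!
Writing `r = |x|`, the operator applied to `φ_λ` is at most
`e^{λr²} (4λ²Λ r² + 2λdΛ - 2λK₂ r² (log r)^α)`. Since `log φ_λ = λr²` and `log log φ_λ ∼ 2 log r`,
the drift term is of the order of `g(φ_λ)`, where `g(y) = y log y (log log y)^α`, and it absorbs the
other two for large `r`. The function `g` vanishes at `e` and is increasing and convex on `[e, ∞)`,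
and `1/g` is integrable at infinity exactly because `α > 1`: it is the derivative of
`-(log log y)^{1-α} / (α - 1)`. Extending `g` by its value at `e` and subtracting a
constant to pay for the bounded range of `r`, on which everything is continuous, one obtains
`h(y) = ε g(max y e) - M`.
-/

section ConvexRate

open Asymptotics Filter Set

/-- A convex nondecreasing dissipation rate on `[0, ∞)`, positive from `c` on and with integrable
reciprocal there, so that solutions of `y' = -h(y)` come down from infinity in finite time. -/
structure IsConvexRate (c : ℝ) (h : ℝ → ℝ) : Prop where
  convexOn : ConvexOn ℝ (Ici 0) h
  monotoneOn : MonotoneOn h (Ici 0)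
  pos : ∀ y, c ≤ y → 0 < h y
  integrableOn : IntegrableOn (fun y => 1 / h y) (Ici c)

variable {g : ℝ → ℝ} {a : ℝ}

lemma convexOn_comp_max_right (hconv : ConvexOn ℝ (Ici a) g) (hmono : MonotoneOn g (Ici a)) :
    ConvexOn ℝ univ (fun y => g (max y a)) := by
  have himage : (fun y => max y a) '' univ = Ici a := by
    ext z
    exact ⟨by rintro ⟨y, -, rfl⟩; exact le_max_right y a, fun hz => ⟨z, trivial, max_eq_left hz⟩⟩
  have hmax : ConvexOn ℝ univ (fun y : ℝ => max y a) :=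
    (convexOn_id convex_univ).sup (convexOn_const a convex_univ)
  rw [← himage] at hconv hmono
  exact hconv.comp hmax hmono

lemma monotone_comp_max_right (hmono : MonotoneOn g (Ici a)) :
    Monotone (fun y => g (max y a)) := fun y z hyz =>
  hmono (le_max_right y a) (le_max_right z a) (max_le_max_right a hyz)

lemma bddBelow_image_Ici_of_eventually_le {f : ℝ → ℝ} {m : ℝ} (hf : ContinuousOn f (Ici a))
    (hm : ∀ᶠ r in atTop, m ≤ f r) : BddBelow (f '' Ici a) := by
  obtain ⟨R, hR⟩ := eventually_atTop.1 hm
  have hcompact : BddBelow (f '' Icc a R) :=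
    (isCompact_Icc.image_of_continuousOn (hf.mono Icc_subset_Ici_self)).bddBelow
  have htail : BddBelow (f '' Ici R) := ⟨m, by rintro _ ⟨r, hr, rfl⟩; exact hR r hr⟩
  refine (hcompact.union htail).mono ?_
  rw [← image_union]
  exact image_mono Ici_subset_Icc_union_Ici

lemma exists_isConvexRate_of_tendsto (hconv : ConvexOn ℝ (Ici a) g) (hmono : MonotoneOn g (Ici a))
    (htop : Tendsto g atTop atTop) (hint : IntegrableAtFilter (fun y => (g y)⁻¹) atTop)
    {ε : ℝ} (hε : 0 < ε) (M : ℝ) :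
    ∃ c > 0, IsConvexRate c (fun y => ε * g (max y a) - M) := by
  set h : ℝ → ℝ := fun y => ε * g (max y a) - M with h_def
  have h_mono : Monotone h := ((monotone_comp_max_right hmono).const_mul hε.le).add_const (-M)
  have h_conv : ConvexOn ℝ univ h :=
    ((convexOn_comp_max_right hconv hmono).smul hε.le).add_const (-M)
  have h_eq : (fun y => ε * g y - M) =ᶠ[atTop] h := by
    filter_upwards [eventually_ge_atTop a] with y hy
    simp only [h_def, max_eq_left hy]
  have h_top : Tendsto h atTop atTop :=
    (tendsto_atTop_add_const_right _ (-M) (htop.const_mul_atTop hε)).congr' h_eq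
  have h_isBigO : g =O[atTop] h := by
    refine .of_bound (2 / ε) ?_
    filter_upwards [h_eq, h_top.eventually_ge_atTop |M|, htop.eventually_ge_atTop 0]
      with y hy hMy hgy
    rw [Real.norm_of_nonneg hgy, Real.norm_of_nonneg ((abs_nonneg M).trans hMy), div_mul_eq_mul_div,
      le_div_iff₀ hε]
    linarith [le_abs_self M]
  have h_int : IntegrableAtFilter (fun y => (h y)⁻¹) atTop :=
    (h_isBigO.inv_rev <| (htop.eventually_gt_atTop 0).mono fun y hy h0 =>
      absurd h0 hy.ne').integrableAtFilter
      h_mono.measurable.inv.stronglyMeasurable.stronglyMeasurableAtFilter hint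
  obtain ⟨c₁, hc₁⟩ := integrableAtFilter_atTop_iff.1 h_int
  obtain ⟨c₂, hc₂⟩ := eventually_atTop.1 (h_top.eventually_gt_atTop 0)
  refine ⟨max 1 (max c₁ c₂), by positivity, h_conv.subset (subset_univ _) (convex_Ici 0),
    h_mono.monotoneOn _, fun y hy => hc₂ y ?_, ?_⟩
  · exact (le_max_right _ _).trans ((le_max_right _ _).trans hy)
  · simp only [one_div]
    exact hc₁.mono_set (Ici_subset_Ici.2 ((le_max_left _ _).trans (le_max_right _ _)))

lemma exists_isConvexRate_comp_le (hconv : ConvexOn ℝ (Ici a) g) (hmono : MonotoneOn g (Ici a))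
    (htop : Tendsto g atTop atTop) (hint : IntegrableAtFilter (fun y => (g y)⁻¹) atTop)
    {φ F : ℝ → ℝ} {r₀ ε : ℝ} (hφ : ContinuousOn φ (Ici r₀)) (hF : ContinuousOn F (Ici r₀))
    (hφ_top : Tendsto φ atTop atTop) (hε : 0 < ε) (hle : ∀ᶠ r in atTop, ε * g (φ r) ≤ F r) :
    ∃ c > 0, ∃ h, IsConvexRate c h ∧ ∀ r, r₀ ≤ r → h (φ r) ≤ F r := by
  have hg : Continuous (fun y => g (max y a)) :=
    continuousOn_univ.1 ((convexOn_comp_max_right hconv hmono).continuousOn isOpen_univ)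
  have hbdd : BddBelow ((fun r => F r - ε * g (max (φ r) a)) '' Ici r₀) := by
    refine bddBelow_image_Ici_of_eventually_le (m := 0)
      (hF.sub ((hg.comp_continuousOn hφ).const_mul ε)) ?_
    filter_upwards [hle, hφ_top.eventually_ge_atTop a] with r hr hφr
    rwa [max_eq_left hφr, sub_nonneg]
  obtain ⟨m, hm⟩ := hbdd
  obtain ⟨c, hc, hrate⟩ := exists_isConvexRate_of_tendsto hconv hmono htop hint hε (-m)
  refine ⟨c, hc, _, hrate, fun r hr => ?_⟩
  linarith [hm (mem_image_of_mem _ hr)]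

end ConvexRate

section LogLogRate

open Real Filter Set

/-- The Bertrand-type rate `y log y (log log y)^α`, the growth of `φ_λ` times the drift as a
function of `y = φ_λ`. It is meaningful for `y ≥ e`, where `log log y ≥ 0`. -/
noncomputable def logLogRate (α y : ℝ) : ℝ := y * log y * log (log y) ^ α

variable {α y : ℝ}

lemma one_lt_log_of_exp_one_lt (hy : exp 1 < y) : 1 < log y :=
  (lt_log_iff_exp_lt ((exp_pos 1).trans hy)).2 hy

lemma one_le_log_of_exp_one_le (hy : exp 1 ≤ y) : 1 ≤ log y :=
  (le_log_iff_exp_le ((exp_pos 1).trans_le hy)).2 hy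

lemma log_log_nonneg (hy : exp 1 ≤ y) : 0 ≤ log (log y) :=
  log_nonneg (one_le_log_of_exp_one_le hy)

lemma logLogRate_exp (α u : ℝ) : logLogRate α (exp u) = exp u * (u * log u ^ α) := by
  rw [logLogRate, log_exp, mul_assoc]

lemma monotoneOn_log_log : MonotoneOn (fun y => log (log y)) (Ici (exp 1)) := by
  intro y hy _ _ hyz
  have hy₀ : 0 < y := (exp_pos 1).trans_le hy
  have hy₁ : 1 ≤ log y := one_le_log_of_exp_one_le hy
  exact log_le_log (by positivity) (log_le_log hy₀ hyz)

lemma monotoneOn_log_log_rpow {p : ℝ} (hp : 0 ≤ p) :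
    MonotoneOn (fun y => log (log y) ^ p) (Ici (exp 1)) := fun _ hy _ hz hyz =>
  rpow_le_rpow (log_log_nonneg hy) (monotoneOn_log_log hy hz hyz) hp

lemma monotoneOn_log_mul_log_log_rpow {p : ℝ} (hp : 0 ≤ p) :
    MonotoneOn (fun y => log y * log (log y) ^ p) (Ici (exp 1)) := fun y hy _ hz hyz =>
  have hy₀ : 0 < y := (exp_pos 1).trans_le hy
  mul_le_mul (log_le_log hy₀ hyz) (monotoneOn_log_log_rpow hp hy hz hyz)
    (rpow_nonneg (log_log_nonneg hy) p)
    (zero_le_one.trans (one_le_log_of_exp_one_le hz))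

lemma monotoneOn_logLogRate (hα : 0 ≤ α) : MonotoneOn (logLogRate α) (Ici (exp 1)) := by
  intro y hy z hz hyz
  have hy₀ : 0 < y := (exp_pos 1).trans_le hy
  have hy₁ : 1 ≤ log y := one_le_log_of_exp_one_le hy
  simp only [logLogRate, mul_assoc]
  exact mul_le_mul hyz (monotoneOn_log_mul_log_log_rpow hα hy hz hyz)
    (mul_nonneg (by positivity) (rpow_nonneg (log_log_nonneg hy) α)) (hy₀.trans_le hyz).le

lemma hasDerivAt_log_log (hy : exp 1 < y) :
    HasDerivAt (fun y => log (log y)) (y⁻¹ / log y) y :=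
  (hasDerivAt_log ((exp_pos 1).trans hy).ne').log
    (zero_lt_one.trans (one_lt_log_of_exp_one_lt hy)).ne'

lemma hasDerivAt_logLogRate (α : ℝ) (hy : exp 1 < y) :
    HasDerivAt (logLogRate α)
      (log y * log (log y) ^ α + (log (log y) ^ α + α * log (log y) ^ (α - 1))) y := by
  have hy₀ : 0 < y := (exp_pos 1).trans hy
  have hlog : 1 < log y := one_lt_log_of_exp_one_lt hy
  have h := ((hasDerivAt_id y).mul (hasDerivAt_log hy₀.ne')).mul
    ((hasDerivAt_log_log hy).rpow_const (p := α) (Or.inl (log_pos hlog).ne'))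
  refine h.congr_deriv ?_
  simp only [Pi.mul_apply, id_eq]
  field_simp
  ring

lemma continuousOn_logLogRate (hα : 0 ≤ α) : ContinuousOn (logLogRate α) (Ici (exp 1)) := by
  have hpos : ∀ y ∈ Ici (exp 1), y ≠ 0 := fun y hy => ((exp_pos 1).trans_le hy).ne'
  have hlog : ContinuousOn log (Ici (exp 1)) := continuousOn_id.log hpos
  have hlog_ne : ∀ y ∈ Ici (exp 1), log y ≠ 0 := fun y hy =>
    (zero_lt_one.trans_le (one_le_log_of_exp_one_le hy)).ne'
  exact (continuousOn_id.mul hlog).mul ((hlog.log hlog_ne).rpow_const fun _ _ => Or.inr hα)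

lemma convexOn_logLogRate (hα : 1 ≤ α) : ConvexOn ℝ (Ici (exp 1)) (logLogRate α) := by
  have hα₀ : 0 ≤ α := zero_le_one.trans hα
  refine MonotoneOn.convexOn_of_deriv (convex_Ici _) (continuousOn_logLogRate hα₀) ?_ ?_
  · rw [interior_Ici]
    exact fun y hy => (hasDerivAt_logLogRate α hy).differentiableAt.differentiableWithinAt
  · rw [interior_Ici]
    have hpow : MonotoneOn (fun y => α * log (log y) ^ (α - 1)) (Ici (exp 1)) :=
      (monotone_mul_left_of_nonneg hα₀).comp_monotoneOn
        (monotoneOn_log_log_rpow (sub_nonneg.2 hα))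
    have hmono := (monotoneOn_log_mul_log_log_rpow hα₀).add ((monotoneOn_log_log_rpow hα₀).add hpow)
    exact (hmono.mono Ioi_subset_Ici_self).congr fun y hy => (hasDerivAt_logLogRate α hy).deriv.symm

lemma tendsto_log_log_atTop : Tendsto (fun y => log (log y)) atTop atTop :=
  tendsto_log_atTop.comp tendsto_log_atTop

lemma tendsto_logLogRate_atTop (hα : 0 < α) : Tendsto (logLogRate α) atTop atTop :=
  (tendsto_id.atTop_mul_atTop₀ tendsto_log_atTop).atTop_mul_atTop₀
    ((tendsto_rpow_atTop hα).comp tendsto_log_log_atTop)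

lemma hasDerivAt_log_log_rpow_div (hα : α ≠ 1) (hy : exp 1 < y) :
    HasDerivAt (fun y => log (log y) ^ (1 - α) / (1 - α)) (logLogRate α y)⁻¹ y := by
  have hlog : 1 < log y := one_lt_log_of_exp_one_lt hy
  have hloglog : 0 < log (log y) := log_pos hlog
  have h := ((hasDerivAt_log_log hy).rpow_const (p := 1 - α) (Or.inl hloglog.ne')).div_const (1 - α)
  refine h.congr_deriv ?_
  have hα' : 1 - α ≠ 0 := sub_ne_zero.2 hα.symm
  rw [sub_sub_cancel_left, rpow_neg hloglog.le, logLogRate]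
  field_simp

lemma integrableAtFilter_inv_logLogRate (hα : 1 < α) :
    IntegrableAtFilter (fun y => (logLogRate α y)⁻¹) atTop := by
  have hderiv : ∀ y ∈ Ici (exp 2), HasDerivAt (fun y => log (log y) ^ (1 - α) / (1 - α))
      (logLogRate α y)⁻¹ y := fun y hy =>
    hasDerivAt_log_log_rpow_div hα.ne' ((exp_lt_exp.2 one_lt_two).trans_le hy)
  have hnonneg : ∀ y ∈ Ioi (exp 2), 0 ≤ (logLogRate α y)⁻¹ := fun y hy => by
    have hy₁ : exp 1 < y := (exp_lt_exp.2 one_lt_two).trans hy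
    have hlog : 1 < log y := one_lt_log_of_exp_one_lt hy₁
    exact inv_nonneg.2 (mul_nonneg (mul_nonneg ((exp_pos 1).trans hy₁).le (by positivity))
      (rpow_nonneg (log_nonneg hlog.le) α))
  have hlim : Tendsto (fun y => log (log y) ^ (1 - α) / (1 - α)) atTop (nhds 0) := by
    have h := (tendsto_rpow_neg_atTop (sub_pos.2 hα)).comp tendsto_log_log_atTop
    simpa [Function.comp_def] using h.div_const (1 - α)
  exact ⟨Ioi (exp 2), Ioi_mem_atTop _, integrableOn_Ioi_deriv_of_nonneg' hderiv hnonneg hlim⟩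

lemma log_mul_sq_le_three_mul_log {lam r : ℝ} (hlam : 0 < lam) (hr : 0 < r)
    (hle : log lam ≤ log r) : log (lam * r ^ 2) ≤ 3 * log r := by
  rw [log_mul hlam.ne' (by positivity), log_pow]
  push_cast
  linarith

lemma logLogRate_exp_mul_sq_le {lam r : ℝ} (hα : 0 ≤ α) (hlam : 0 < lam) (hr : 1 ≤ r)
    (hone : 1 ≤ lam * r ^ 2) (hle : log lam ≤ log r) :
    logLogRate α (exp (lam * r ^ 2)) ≤
      exp (lam * r ^ 2) * (lam * 3 ^ α * (r ^ 2 * log r ^ α)) := by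
  have hlog : log (lam * r ^ 2) ^ α ≤ 3 ^ α * log r ^ α := by
    rw [← mul_rpow (by norm_num) (log_nonneg hr)]
    exact rpow_le_rpow (log_nonneg hone)
      (log_mul_sq_le_three_mul_log hlam (zero_lt_one.trans_le hr) hle) hα
  calc logLogRate α (exp (lam * r ^ 2))
      = exp (lam * r ^ 2) * (lam * r ^ 2 * log (lam * r ^ 2) ^ α) := logLogRate_exp α _
    _ ≤ exp (lam * r ^ 2) * (lam * r ^ 2 * (3 ^ α * log r ^ α)) := by gcongr
    _ = exp (lam * r ^ 2) * (lam * 3 ^ α * (r ^ 2 * log r ^ α)) := by ring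

lemma eventually_add_le_mul_sq_mul_log_rpow {C : ℝ} (hα : 0 < α) (hC : 0 < C) (A B : ℝ) :
    ∀ᶠ r in atTop, A * r ^ 2 + B ≤ C * (r ^ 2 * log r ^ α) := by
  have hlog : Tendsto (fun r => C * log r ^ α) atTop atTop :=
    ((tendsto_rpow_atTop hα).comp tendsto_log_atTop).const_mul_atTop hC
  filter_upwards [hlog.eventually_ge_atTop (A + |B|), eventually_ge_atTop 1] with r hlog_r hr
  have hsq : 1 ≤ r ^ 2 := one_le_pow₀ hr
  calc A * r ^ 2 + B ≤ A * r ^ 2 + |B| * r ^ 2 := by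
        gcongr
        exact (le_abs_self B).trans (le_mul_of_one_le_right (abs_nonneg B) hsq)
    _ = (A + |B|) * r ^ 2 := by ring
    _ ≤ C * log r ^ α * r ^ 2 := by gcongr
    _ = C * (r ^ 2 * log r ^ α) := by ring

lemma eventually_mul_logLogRate_exp_mul_sq_le {lam C : ℝ} (hα : 0 < α) (hlam : 0 < lam)
    (hC : 0 < C) (A B : ℝ) :
    ∀ᶠ r in atTop, C / (2 * (lam * 3 ^ α)) * logLogRate α (exp (lam * r ^ 2)) ≤
      exp (lam * r ^ 2) * (C * (r ^ 2 * log r ^ α) - (A * r ^ 2 + B)) := by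
  have hsq_top : Tendsto (fun r : ℝ => lam * r ^ 2) atTop atTop :=
    (tendsto_pow_atTop two_ne_zero).const_mul_atTop hlam
  filter_upwards [eventually_add_le_mul_sq_mul_log_rpow hα (half_pos hC) A B,
    eventually_ge_atTop 1, hsq_top.eventually_ge_atTop 1,
    tendsto_log_atTop.eventually_ge_atTop (log lam)] with r hAB hr hone hle
  calc C / (2 * (lam * 3 ^ α)) * logLogRate α (exp (lam * r ^ 2))
      ≤ C / (2 * (lam * 3 ^ α)) *
          (exp (lam * r ^ 2) * (lam * 3 ^ α * (r ^ 2 * log r ^ α))) := by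
        gcongr
        exact logLogRate_exp_mul_sq_le hα.le hlam hr hone hle
    _ = exp (lam * r ^ 2) * (C / 2 * (r ^ 2 * log r ^ α)) := by field_simp
    _ ≤ exp (lam * r ^ 2) * (C * (r ^ 2 * log r ^ α) - (A * r ^ 2 + B)) := by
        gcongr
        linarith

lemma exists_isConvexRate_exp_mul_sq_le {lam C r₀ : ℝ} (hα : 1 < α) (hlam : 0 < lam) (hC : 0 < C)
    (hr₀ : 0 < r₀) (A B : ℝ) :
    ∃ c > 0, ∃ h, IsConvexRate c h ∧ ∀ r, r₀ ≤ r →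
      h (exp (lam * r ^ 2)) ≤ exp (lam * r ^ 2) * (C * (r ^ 2 * log r ^ α) - (A * r ^ 2 + B)) := by
  have hα₀ : 0 < α := zero_lt_one.trans hα
  have hlog : ContinuousOn log (Ici r₀) := continuousOn_id.log fun r hr => (hr₀.trans_le hr).ne'
  have hlog_rpow : ContinuousOn (fun r => log r ^ α) (Ici r₀) :=
    hlog.rpow_const fun _ _ => Or.inr hα₀.le
  exact exists_isConvexRate_comp_le (convexOn_logLogRate hα.le) (monotoneOn_logLogRate hα₀.le)
    (tendsto_logLogRate_atTop hα₀) (integrableAtFilter_inv_logLogRate hα)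
    (by fun_prop) (by fun_prop)
    (tendsto_exp_atTop.comp ((tendsto_pow_atTop two_ne_zero).const_mul_atTop hlam))
    (by positivity) (eventually_mul_logLogRate_exp_mul_sq_le hα₀ hlam hC A B)

end LogLogRate

section Gaussian

variable {E : Type*} [NormedAddCommGroup E] [InnerProductSpace ℝ E]

lemma hasFDerivAt_exp_mul_norm_sq (lam : ℝ) (x : E) :
    HasFDerivAt (fun y : E => Real.exp (lam * ‖y‖ ^ 2))
      ((2 * lam * Real.exp (lam * ‖x‖ ^ 2)) • innerSL ℝ x) x := by
  refine ((hasStrictFDerivAt_norm_sq x).hasFDerivAt.const_mul lam).exp.congr_fderiv ?_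
  ext v
  simp only [smul_apply, smul_eq_mul, nsmul_eq_mul, Nat.cast_ofNat]
  ring

lemma fderiv_fderiv_exp_mul_norm_sq (lam : ℝ) (x u v : E) :
    fderiv ℝ (fun y => fderiv ℝ (fun z : E => Real.exp (lam * ‖z‖ ^ 2)) y) x u v =
      Real.exp (lam * ‖x‖ ^ 2) * (4 * lam ^ 2 * (⟪x, u⟫ * ⟪x, v⟫) + 2 * lam * ⟪u, v⟫) := by
  have hgrad : (fun y => fderiv ℝ (fun z : E => Real.exp (lam * ‖z‖ ^ 2)) y) =
      fun y => (2 * lam * Real.exp (lam * ‖y‖ ^ 2)) • innerSL ℝ y :=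
    funext fun y => (hasFDerivAt_exp_mul_norm_sq lam y).fderiv
  have hhess := ((hasFDerivAt_exp_mul_norm_sq lam x).const_mul (2 * lam)).smul
    (innerSL ℝ (E := E)).hasFDerivAt
  rw [hgrad]
  calc fderiv ℝ (fun y => (2 * lam * Real.exp (lam * ‖y‖ ^ 2)) • innerSL ℝ y) x u v
      = 2 * lam * Real.exp (lam * ‖x‖ ^ 2) * ⟪u, v⟫ +
          2 * lam * (2 * lam * Real.exp (lam * ‖x‖ ^ 2) * ⟪x, u⟫) * ⟪x, v⟫ :=
        congrArg (fun L => L u v) hhess.fderiv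
    _ = Real.exp (lam * ‖x‖ ^ 2) * (4 * lam ^ 2 * (⟪x, u⟫ * ⟪x, v⟫) + 2 * lam * ⟪u, v⟫) := by ring

lemma trace_le_finrank_mul [FiniteDimensional ℝ E] {T : E →ₗ[ℝ] E} {Λ : ℝ}
    (hT : ∀ ξ, ⟪T ξ, ξ⟫ ≤ Λ * ‖ξ‖ ^ 2) : LinearMap.trace ℝ E T ≤ Module.finrank ℝ E * Λ := by
  let e := stdOrthonormalBasis ℝ E
  calc LinearMap.trace ℝ E T = ∑ i, ⟪T (e i), e i⟫ := by
        simp only [T.trace_eq_sum_inner e, real_inner_comm]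
    _ ≤ ∑ _i : Fin (Module.finrank ℝ E), Λ :=
        Finset.sum_le_sum fun i _ => by simpa using hT (e i)
    _ = Module.finrank ℝ E * Λ := by simp

end Gaussian

section EllOp

variable {d : ℕ} (Q : EuclideanSpace ℝ (Fin d) →L[ℝ] EuclideanSpace ℝ (Fin d))
  (v x : EuclideanSpace ℝ (Fin d))

lemma ellOp_exp_mul_norm_sq (lam : ℝ) :
    ellOp Q v (fun y => Real.exp (lam * ‖y‖ ^ 2)) x =
      Real.exp (lam * ‖x‖ ^ 2) * (4 * lam ^ 2 * ⟪Q x, x⟫ +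
        2 * lam * (LinearMap.trace ℝ _ Q.toLinearMap + ⟪v, x⟫)) := by
  let e := EuclideanSpace.basisFun (Fin d) ℝ
  have hquad : ∑ i, ⟪x, Q (e i)⟫ * ⟪x, e i⟫ = ⟪Q x, x⟫ := by
    calc ∑ i, ⟪x, Q (e i)⟫ * ⟪x, e i⟫ = ∑ i, ⟪Q.adjoint x, e i⟫ * ⟪e i, x⟫ := by
          simp only [Q.adjoint_inner_left, real_inner_comm]
      _ = ⟪Q.adjoint x, x⟫ := e.sum_inner_mul_inner _ _
      _ = ⟪Q x, x⟫ := by rw [Q.adjoint_inner_left, real_inner_comm]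
  have htrace : ∑ i, ⟪Q (e i), e i⟫ = LinearMap.trace ℝ _ Q.toLinearMap := by
    simp [Q.toLinearMap.trace_eq_sum_inner e, real_inner_comm]
  simp only [ellOp, fderiv_fderiv_exp_mul_norm_sq, (hasFDerivAt_exp_mul_norm_sq lam x).fderiv,
    ← EuclideanSpace.basisFun_apply, ← Finset.mul_sum, Finset.sum_add_distrib]
  rw [hquad, htrace]
  simp only [real_inner_comm, smul_apply, coe_innerSL_apply, smul_eq_mul]
  ring

variable {Q} in
lemma ellOp_exp_mul_norm_sq_le {lam Λ : ℝ} (hlam : 0 ≤ lam)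
    (hQ : ∀ ξ, ⟪Q ξ, ξ⟫ ≤ Λ * ‖ξ‖ ^ 2) :
    ellOp Q v (fun y => Real.exp (lam * ‖y‖ ^ 2)) x ≤
      Real.exp (lam * ‖x‖ ^ 2) *
        (4 * lam ^ 2 * (Λ * ‖x‖ ^ 2) + 2 * lam * (d * Λ + ⟪v, x⟫)) := by
  have htrace : LinearMap.trace ℝ _ Q.toLinearMap ≤ d * Λ := by
    simpa using trace_le_finrank_mul (T := Q.toLinearMap) hQ
  rw [ellOp_exp_mul_norm_sq]
  gcongr
  exact hQ x

end EllOp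

theorem lyapunov_with_convex_rate_general {ι : Type*} {d : ℕ} {Λ K₂ α R₀ lam : ℝ}
    (hK : 0 < K₂) (hα : 1 < α) (hR₀ : 1 ≤ R₀) (hlam : 0 < lam)
    (Q : ι → EuclideanSpace ℝ (Fin d) →L[ℝ] EuclideanSpace ℝ (Fin d))
    (hQ : ∀ t ξ, ⟪Q t ξ, ξ⟫ ≤ Λ * ‖ξ‖ ^ 2)
    (b : ι → EuclideanSpace ℝ (Fin d) → EuclideanSpace ℝ (Fin d))
    (hb : ∀ t x, R₀ ≤ ‖x‖ → ⟪b t x, x⟫ ≤ -K₂ * ‖x‖ ^ 2 * Real.log ‖x‖ ^ α) :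
    ∃ c > (0 : ℝ), ∃ h : ℝ → ℝ, IsConvexRate c h ∧ ∀ t x, R₀ ≤ ‖x‖ →
      ellOp (Q t) (b t x) (fun y => Real.exp (lam * ‖y‖ ^ 2)) x
        ≤ -h (Real.exp (lam * ‖x‖ ^ 2)) := by
  obtain ⟨c, hc, h, hrate, hle⟩ := exists_isConvexRate_exp_mul_sq_le (C := 2 * lam * K₂) hα hlam
    (by positivity) (zero_lt_one.trans_le hR₀) (4 * lam ^ 2 * Λ) (2 * lam * (d * Λ))
  refine ⟨c, hc, h, hrate, fun t x hx => ?_⟩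
  calc ellOp (Q t) (b t x) (fun y => Real.exp (lam * ‖y‖ ^ 2)) x
      ≤ Real.exp (lam * ‖x‖ ^ 2) *
          (4 * lam ^ 2 * (Λ * ‖x‖ ^ 2) + 2 * lam * (d * Λ + ⟪b t x, x⟫)) :=
        ellOp_exp_mul_norm_sq_le _ _ hlam.le (hQ t)
    _ ≤ Real.exp (lam * ‖x‖ ^ 2) * (4 * lam ^ 2 * (Λ * ‖x‖ ^ 2) +
          2 * lam * (d * Λ + -K₂ * ‖x‖ ^ 2 * Real.log ‖x‖ ^ α)) := by
        gcongr
        exact hb t x hx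
    _ ≤ -h (Real.exp (lam * ‖x‖ ^ 2)) := by linarith [hle ‖x‖ hx]

/-- under the drift condition `⟨b(t,x),x⟩ ≤ −K₂|x|²(log|x|)^α`, `α > 1`,
for every `λ > 0` there are `c > 0` and a convex nondecreasing function `h` on `[0,∞)`,
positive on `[c,∞)` with `∫_c^∞ dy/h(y) < ∞`, such that
`𝒜(t)φ_λ(x) ≤ −h(φ_λ(x))` for all `t ∈ I`, `|x| ≥ R₀`, where `φ_λ(x) = e^{λ|x|²}`. -/
theorem lyapunov_with_convex_rate
    {d : ℕ} (hd : 1 ≤ d) (I : Set ℝ) (hIconn : I.OrdConnected)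
    (η₀ Λ K₂ α R₀ : ℝ)
    (hη₀ : 0 < η₀) (hηΛ : η₀ < Λ) (hK : 0 < K₂) (hα : 1 < α) (hR₀ : 1 < R₀)
    (Q : ℝ → EuclideanSpace ℝ (Fin d) →L[ℝ] EuclideanSpace ℝ (Fin d))
    (hQsym : ∀ t ∈ I, ∀ ξ η : EuclideanSpace ℝ (Fin d), ⟪Q t ξ, η⟫ = ⟪ξ, Q t η⟫)
    (hQell : ∀ t ∈ I, ∀ ξ : EuclideanSpace ℝ (Fin d),
      η₀ * ‖ξ‖ ^ 2 ≤ ⟪Q t ξ, ξ⟫ ∧ ⟪Q t ξ, ξ⟫ ≤ Λ * ‖ξ‖ ^ 2)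
    (b : ℝ → EuclideanSpace ℝ (Fin d) → EuclideanSpace ℝ (Fin d))
    (hb : ∀ t ∈ I, ∀ x : EuclideanSpace ℝ (Fin d), R₀ ≤ ‖x‖ →
      ⟪b t x, x⟫ ≤ -K₂ * ‖x‖ ^ 2 * Real.log ‖x‖ ^ α) :
    ∀ lam > (0 : ℝ), ∃ c > (0 : ℝ), ∃ h : ℝ → ℝ,
      ConvexOn ℝ (Set.Ici 0) h ∧ MonotoneOn h (Set.Ici 0) ∧
      (∀ y, c ≤ y → 0 < h y) ∧
      IntegrableOn (fun y => 1 / h y) (Set.Ici c) ∧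
      ∀ t ∈ I, ∀ x : EuclideanSpace ℝ (Fin d), R₀ ≤ ‖x‖ →
        ellOp (Q t) (b t x) (fun y => Real.exp (lam * ‖y‖ ^ 2)) x
          ≤ -h (Real.exp (lam * ‖x‖ ^ 2)) := by
  intro lam hlam
  obtain ⟨c, hc, h, hrate, hle⟩ := lyapunov_with_convex_rate_general hK hα hR₀.le hlam
    (fun t : I => Q t) (fun t ξ => (hQell t t.2 ξ).2) (fun t : I => b t) (fun t => hb t t.2)
  exact ⟨c, hc, h, hrate.convexOn, hrate.monotoneOn, hrate.pos, hrate.integrableOn,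
    fun t ht => hle ⟨t, ht⟩⟩
end
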